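/- arXiv:2005.03548 — 2 statements merged into one kernel-verified Lean document; each statement's English description precedes it below -/
import Mathlib

section
/- Let K_i be standard Calderón–Zygmund kernels on ℝ^{d_i} (exponents α_i, constants C_{K_i}) that are symmetrically non-degenerate with constant c₀ (i = 1,2), and let p1, p2, q1, q2 ∈ (1,∞). There exist constants 0 < c1 ≤ c2, depending only on d1, d2, α1, α2, C_{K1}, C_{K2}, c₀, and C > 0, depending additionally on p1, p2, q1, q2, such that the following holds. Let b : ℝ^{d1}×ℝ^{d2} → ℂ be locally integrable and let C₀ ∈ [0,∞) be such that for every admissible configuration (P1 = J1×J2, P2 = L1×L2) with separation constants c1, c2 and all measurable f1, f2 with |f1| ≤ 1_{P1} and |f2| ≤ 1_{P2}, one has |Λ(f1,f2)| ≤ C₀ · |J1|^{1 + 1/p1 − 1/q1} · |J2|^{1 + 1/p2 − 1/q2}. Then for every rectangle R = I1×I2: osc^{1,1}(b,R) ≤ C · C₀ · |I1|^{1 + 1/p1 − 1/q1} · |I2|^{1 + 1/p2 − 1/q2}. -/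
/-!
The oscillation is recovered from the form by an approximate-weak-factorization argument carried
out directly on the double difference of `b`.

Fix a rectangle `I1 × I2`. Non-degeneracy and the regularity of the kernels give, for each `I_i`, a
companion cube `J_i` of the same size at comparable distance such that `K_i` is within `1/40`
(relatively) of a constant `k_i` on `I_i × J_i`, and of another constant `k_i'` on `J_i × I_i`,
both of modulus at least about `|I_i|⁻¹` (`exists_companion`). With normalized Lebesgue measures on
the cubes, let `Y` (`ddMean`) be the mean of the absolute double difference with
`x_i ∈ I_i`, `y_i ∈ J_i`.

* Replacing differences by differences with averages, one parameter at a time, bounds `Y` by the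
  `L¹` norms of the averages of the double difference over one of the two points in each parameter
  (`ddMean_le`); there are four such norms, with coefficients adding up to `9`.
* Each of these norms is, by duality, the form `Λ` with the kernels replaced by constants, tested
  on the indicator of one rectangle and a function bounded by one on the other. Hence it is at most
  the testing bound plus `Y / 18`, the last term being the error from freezing the kernels
  (`exists_test_function`, `ddAvgNorm_le_of_test`). The four norms use the four admissible
  configurations in which each parameter has `I_i` and `J_i` in either role; this is where
  non-degeneracy in both orders of the arguments is needed.
* Local integrability makes `Y` finite, so the `9 · Y / 18` is absorbed (`absorb_le`).
* The oscillation over `I1 × I2` is at most `|I1| |I2|` times the mean double difference within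
  `I1 × I2`, which is at most `4 Y` (`osc11_le`, `ddMean_self_le`).

Measurability of slices and of the double difference is handled by passing to a Borel measurable
representative of `b`, which changes neither the form nor the oscillation (`biCommForm_congr`,
`osc11_congr`).
-/

open MeasureTheory ENNReal Set

noncomputable section

/-- `Euc d` is the Euclidean space `ℝ^d`. -/
abbrev Euc (d : ℕ) := EuclideanSpace ℝ (Fin d)

/-- An axis-parallel cube in `ℝ^d`, described by its center and positive side length. -/
structure Cube (d : ℕ) where
  center : Euc d
  side : ℝ
  side_pos : 0 < side

/-- The set of points of a cube. -/
def Cube.carrier {d : ℕ} (I : Cube d) : Set (Euc d) :=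
  {x | ∀ i, |x i - I.center i| ≤ I.side / 2}

/-- The average `⟨b⟩_I` of a function over a cube. -/
def cubeAvg {d : ℕ} (b : Euc d → ℂ) (I : Cube d) : ℂ :=
  (volume I.carrier).toReal⁻¹ • ∫ x in I.carrier, b x

/-- The homogeneous Hölder seminorm `‖b‖_{Ċ^{0,α}}`, valued in `[0,∞]`. -/
def holderSeminorm {d : ℕ} (α : ℝ) (b : Euc d → ℂ) : ℝ≥0∞ :=
  ⨆ (x : Euc d) (y : Euc d) (_ : x ≠ y), ENNReal.ofReal (‖b x - b y‖ / dist x y ^ α)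
/-- The norm `‖b‖_{∙L^r}` = infimum over constants `c` of the `L^r` norm of `b - c`. -/
def dotLrNorm {d : ℕ} (r : ℝ) (b : Euc d → ℂ) : ℝ≥0∞ :=
  ⨅ c : ℂ, eLpNorm (fun x => b x - c) (ENNReal.ofReal r) volume

/-- The BMO norm of `b`, valued in `[0,∞]`. -/
def bmoNorm {d : ℕ} (b : Euc d → ℂ) : ℝ≥0∞ :=
  ⨆ I : Cube d, ENNReal.ofReal ((volume I.carrier).toReal⁻¹ * ∫ x in I.carrier, ‖b x - cubeAvg b I‖)

/-- The sharp maximal function `M♯b`. -/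
def sharpMaximal {d : ℕ} (b : Euc d → ℂ) (x : Euc d) : ℝ≥0∞ :=
  ⨆ (I : Cube d) (_ : x ∈ I.carrier),
    ENNReal.ofReal ((volume I.carrier).toReal⁻¹ * ∫ y in I.carrier, ‖b y - cubeAvg b I‖)

/-- A (countable) collection of cubes is sparse if each cube `Q` carries a measurable subset
`E Q` of at least half its measure, these subsets being pairwise disjoint. -/
def IsSparse {d : ℕ} (𝒮 : Set (Cube d)) : Prop :=
  𝒮.Countable ∧ ∃ E : Cube d → Set (Euc d),
    (∀ Q ∈ 𝒮, MeasurableSet (E Q) ∧ E Q ⊆ Q.carrier ∧ volume Q.carrier ≤ 2 * volume (E Q)) ∧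
    𝒮.PairwiseDisjoint E

/-- Average of `b (·, x2)` over a cube in the first factor. -/
def avgFst {d1 d2 : ℕ} (b : Euc d1 × Euc d2 → ℂ) (I1 : Cube d1) (x2 : Euc d2) : ℂ :=
  (volume I1.carrier).toReal⁻¹ • ∫ y1 in I1.carrier, b (y1, x2)

/-- Average of `b (x1, ·)` over a cube in the second factor. -/
def avgSnd {d1 d2 : ℕ} (b : Euc d1 × Euc d2 → ℂ) (I2 : Cube d2) (x1 : Euc d1) : ℂ :=
  (volume I2.carrier).toReal⁻¹ • ∫ y2 in I2.carrier, b (x1, y2)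

/-- Average of `b` over the rectangle `I1 × I2`. -/
def avgRect {d1 d2 : ℕ} (b : Euc d1 × Euc d2 → ℂ) (I1 : Cube d1) (I2 : Cube d2) : ℂ :=
  (volume (I1.carrier ×ˢ I2.carrier)).toReal⁻¹ • ∫ x in I1.carrier ×ˢ I2.carrier, b x

/-- The bi-parameter oscillation `osc^{1,1}(b, I1 × I2)`. -/
def osc11 {d1 d2 : ℕ} (b : Euc d1 × Euc d2 → ℂ) (I1 : Cube d1) (I2 : Cube d2) : ℝ :=
  ∫ x in I1.carrier ×ˢ I2.carrier,
    ‖b x - avgFst b I1 x.2 - avgSnd b I2 x.1 + avgRect b I1 I2‖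

/-- The `L^p` "norm" (with exponent `p ∈ [1,∞]`) of an `ℝ≥0∞`-valued function. -/
def lpNormENN {α : Type*} [MeasurableSpace α] (μ : Measure α) (p : ℝ≥0∞) (g : α → ℝ≥0∞) : ℝ≥0∞ :=
  if p = ∞ then essSup g μ else (∫⁻ x, g x ^ p.toReal ∂μ) ^ (1 / p.toReal)

/-- The mixed norm `‖F‖_{L^{v1}_{x1} L^{v2}_{x2}}`. -/
def mixedNorm {d1 d2 : ℕ} {E : Type*} [NormedAddCommGroup E] (v1 v2 : ℝ≥0∞)
    (F : Euc d1 × Euc d2 → E) : ℝ≥0∞ :=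
  lpNormENN volume v1 (fun x1 => lpNormENN volume v2 (fun x2 => (‖F (x1, x2)‖₊ : ℝ≥0∞)))

/-- The oscillation `osc^{v1,v2}(b, I1 × I2)` with general mixed exponents. -/
def oscMixed {d1 d2 : ℕ} (v1 v2 : ℝ≥0∞) (b : Euc d1 × Euc d2 → ℂ)
    (I1 : Cube d1) (I2 : Cube d2) : ℝ≥0∞ :=
  mixedNorm v1 v2 ((I1.carrier ×ˢ I2.carrier).indicator
    (fun x => b x - avgFst b I1 x.2 - avgSnd b I2 x.1 + avgRect b I1 I2))

/-- A standard Calderón–Zygmund kernel on `ℝ^n` with exponent `α` and constant `CK`. -/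
def IsCZKernel (n : ℕ) (α CK : ℝ) (K : Euc n → Euc n → ℂ) : Prop :=
  (∀ x y : Euc n, x ≠ y → ‖K x y‖ ≤ CK / dist x y ^ (n : ℝ)) ∧
  (∀ x x' y : Euc n, x ≠ y → dist x x' ≤ dist x y / 2 →
    ‖K x y - K x' y‖ + ‖K y x - K y x'‖ ≤ CK * dist x x' ^ α / dist x y ^ ((n : ℝ) + α))

/-- Symmetric non-degeneracy of a kernel with constant `c₀`. -/
def SymNonDeg (n : ℕ) (c₀ : ℝ) (K : Euc n → Euc n → ℂ) : Prop :=
  ∀ (y : Euc n) (r : ℝ), 0 < r → ∃ x : Euc n, r ≤ dist x y ∧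
    1 / (c₀ * r ^ (n : ℝ)) ≤ ‖K x y‖ ∧ 1 / (c₀ * r ^ (n : ℝ)) ≤ ‖K y x‖

/-- Distance between two sets in a metric space. -/
def setDist {α : Type*} [PseudoMetricSpace α] (s t : Set α) : ℝ :=
  sInf (Set.image2 dist s t)

/-- An admissible configuration: the rectangles `J1 × J2` and `L1 × L2` have matching side
lengths in each parameter, and separation comparable to the common side length, with
comparability constants `c1 ≤ c2`. -/
def IsAdmissible {d1 d2 : ℕ} (c1 c2 : ℝ) (J1 L1 : Cube d1) (J2 L2 : Cube d2) : Prop :=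
  J1.side = L1.side ∧ J2.side = L2.side ∧
  c1 * J1.side ≤ setDist J1.carrier L1.carrier ∧ setDist J1.carrier L1.carrier ≤ c2 * J1.side ∧
  c1 * J2.side ≤ setDist J2.carrier L2.carrier ∧ setDist J2.carrier L2.carrier ≤ c2 * J2.side

/-- The difference `B(x,y) = b(x1,x2) − b(x1,y2) − b(y1,x2) + b(y1,y2)`. -/
def biB {d1 d2 : ℕ} (b : Euc d1 × Euc d2 → ℂ) (x y : Euc d1 × Euc d2) : ℂ :=
  b (x.1, x.2) - b (x.1, y.2) - b (y.1, x.2) + b (y.1, y.2)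

/-- The bilinear form `Λ(f1, f2) = ∬ B(x,y) K1(x1,y1) K2(x2,y2) f1(y) f2(x) dy dx`. -/
def biCommForm {d1 d2 : ℕ} (b : Euc d1 × Euc d2 → ℂ) (K1 : Euc d1 → Euc d1 → ℂ)
    (K2 : Euc d2 → Euc d2 → ℂ) (f1 f2 : Euc d1 × Euc d2 → ℂ) : ℂ :=
  ∫ x : Euc d1 × Euc d2, ∫ y : Euc d1 × Euc d2,
    biB b x y * K1 x.1 y.1 * K2 x.2 y.2 * f1 y * f2 x

/-! ### Mean double differences over probability measures -/

/-- The double difference of `b` over the four corners with coordinates `x1, y1` and `x2, y2`. -/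
def dd {X Y : Type*} (b : X × Y → ℂ) (x1 y1 : X) (x2 y2 : Y) : ℂ :=
  b (x1, x2) - b (x1, y2) - b (y1, x2) + b (y1, y2)

lemma dd_eq_fst {X Y : Type*} (b : X × Y → ℂ) (x1 y1 : X) (x2 y2 : Y) :
    dd b x1 y1 x2 y2 = (b (x1, x2) - b (x1, y2)) - (b (y1, x2) - b (y1, y2)) := by
  unfold dd; ring

lemma dd_eq_snd {X Y : Type*} (b : X × Y → ℂ) (x1 y1 : X) (x2 y2 : Y) :
    dd b x1 y1 x2 y2 = (b (x1, x2) - b (y1, x2)) - (b (x1, y2) - b (y1, y2)) := by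
  unfold dd; ring

section Abstract

variable {X Y : Type*} [MeasurableSpace X] [MeasurableSpace Y]

/-- The two-point mean is controlled by the one-sided averages: compare `φ x` with the `ν`-mean of
`φ`, `φ y` with its `μ`-mean, and the two means with each other. -/
lemma lintegral_diff_le {μ ν : Measure X} [IsProbabilityMeasure μ] [IsProbabilityMeasure ν]
    {φ : X → ℂ} (hμ : Integrable φ μ) (hν : Integrable φ ν) :
    ∫⁻ x, ∫⁻ y, ‖φ x - φ y‖ₑ ∂ν ∂μ ≤
      2 * ∫⁻ x, ‖∫ y, (φ x - φ y) ∂ν‖ₑ ∂μ + ∫⁻ y, ‖∫ x, (φ y - φ x) ∂μ‖ₑ ∂ν := by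
  have h1 : ∀ x, ∫ y, (φ x - φ y) ∂ν = φ x - ∫ y, φ y ∂ν := by
    intro x
    rw [integral_sub (integrable_const _) hν]; simp
  have h2 : ∀ y, ∫ x, (φ y - φ x) ∂μ = φ y - ∫ x, φ x ∂μ := by
    intro y
    rw [integral_sub (integrable_const _) hμ]; simp
  simp_rw [h1, h2]
  set s := ∫ y, φ y ∂ν with hs
  set t := ∫ x, φ x ∂μ with ht
  have h3 : ‖t - s‖ₑ ≤ ∫⁻ x, ‖φ x - s‖ₑ ∂μ := by
    have : t - s = ∫ x, (φ x - s) ∂μ := by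
      rw [integral_sub hμ (integrable_const _)]; simp [ht]
    rw [this]
    exact enorm_integral_le_lintegral_enorm _
  have h4 : ∀ x y, ‖φ x - φ y‖ₑ ≤ ‖φ x - s‖ₑ + (‖φ y - t‖ₑ + ‖t - s‖ₑ) := by
    intro x y
    have : φ x - φ y = (φ x - s) - ((φ y - t) + (t - s)) := by ring
    rw [this]
    exact (enorm_sub_le).trans (add_le_add le_rfl (enorm_add_le _ _))
  calc ∫⁻ x, ∫⁻ y, ‖φ x - φ y‖ₑ ∂ν ∂μ
      ≤ ∫⁻ x, ∫⁻ y, (‖φ x - s‖ₑ + (‖φ y - t‖ₑ + ‖t - s‖ₑ)) ∂ν ∂μ :=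
        lintegral_mono fun x => lintegral_mono fun y => h4 x y
    _ = ∫⁻ x, ‖φ x - s‖ₑ ∂μ + (∫⁻ y, ‖φ y - t‖ₑ ∂ν + ‖t - s‖ₑ) := by
        have : ∀ x, ∫⁻ y, (‖φ x - s‖ₑ + (‖φ y - t‖ₑ + ‖t - s‖ₑ)) ∂ν
            = ‖φ x - s‖ₑ + (∫⁻ y, ‖φ y - t‖ₑ ∂ν + ‖t - s‖ₑ) := by
          intro x
          rw [lintegral_add_left measurable_const, lintegral_add_right _ measurable_const]
          simp
        simp_rw [this]
        rw [lintegral_add_right _ measurable_const]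
        simp
    _ ≤ ∫⁻ x, ‖φ x - s‖ₑ ∂μ + (∫⁻ y, ‖φ y - t‖ₑ ∂ν + ∫⁻ x, ‖φ x - s‖ₑ ∂μ) := by gcongr
    _ = _ := by ring

/-- Differences within `μ` are compared through an auxiliary point distributed according to `ν`. -/
lemma lintegral_diff_self_le {μ ν : Measure X} [IsProbabilityMeasure μ] [IsProbabilityMeasure ν]
    {φ : X → ℂ} (hφ : Measurable φ) :
    ∫⁻ x, ∫⁻ z, ‖φ x - φ z‖ₑ ∂μ ∂μ ≤ 2 * ∫⁻ x, ∫⁻ y, ‖φ x - φ y‖ₑ ∂ν ∂μ := by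
  have hm : Measurable fun x => ∫⁻ y, ‖φ x - φ y‖ₑ ∂ν :=
    Measurable.lintegral_prod_right' (f := fun p : X × X => ‖φ p.1 - φ p.2‖ₑ) (by fun_prop)
  have h : ∀ x z, ‖φ x - φ z‖ₑ ≤ ∫⁻ y, ‖φ x - φ y‖ₑ ∂ν + ∫⁻ y, ‖φ z - φ y‖ₑ ∂ν := by
    intro x z
    rw [← lintegral_add_left (by fun_prop)]
    calc ‖φ x - φ z‖ₑ = ∫⁻ y, ‖φ x - φ z‖ₑ ∂ν := by simp
      _ ≤ _ := lintegral_mono fun y => by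
        have : φ x - φ z = (φ x - φ y) - (φ z - φ y) := by ring
        rw [this]
        exact enorm_sub_le
  calc _ ≤ ∫⁻ x, ∫⁻ z, (∫⁻ y, ‖φ x - φ y‖ₑ ∂ν + ∫⁻ y, ‖φ z - φ y‖ₑ ∂ν) ∂μ ∂μ :=
        lintegral_mono fun x => lintegral_mono fun z => h x z
    _ = _ := by
        have : ∀ x, ∫⁻ z, (∫⁻ y, ‖φ x - φ y‖ₑ ∂ν + ∫⁻ y, ‖φ z - φ y‖ₑ ∂ν) ∂μ =
            ∫⁻ y, ‖φ x - φ y‖ₑ ∂ν + ∫⁻ z, ∫⁻ y, ‖φ z - φ y‖ₑ ∂ν ∂μ := by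
          intro x
          rw [lintegral_add_left measurable_const]; simp
        simp_rw [this]
        rw [lintegral_add_right _ measurable_const]
        simp [two_mul]

/-- The `L¹` mean of the double difference, each of the four coordinates having its own measure. -/
def ddMean (b : X × Y → ℂ) (μ1 ν1 : Measure X) (μ2 ν2 : Measure Y) : ℝ≥0∞ :=
  ∫⁻ x1, ∫⁻ y1, ∫⁻ x2, ∫⁻ y2, ‖dd b x1 y1 x2 y2‖ₑ ∂ν2 ∂μ2 ∂ν1 ∂μ1

/-- The `L¹(μ1 × μ2)` norm of the double difference averaged over the second corner. -/
def ddAvgNorm (b : X × Y → ℂ) (μ1 ν1 : Measure X) (μ2 ν2 : Measure Y) : ℝ≥0∞ :=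
  ∫⁻ x1, ∫⁻ x2, ‖∫ y2, ∫ y1, dd b x1 y1 x2 y2 ∂ν1 ∂ν2‖ₑ ∂μ2 ∂μ1

/-- Moving the innermost pair of variables outside, for a nonnegative function of four variables. -/
lemma lintegral_swap4 {μ1 ν1 : Measure X} {μ2 ν2 : Measure Y} [SFinite μ1] [SFinite ν1]
    [SFinite μ2] [SFinite ν2] {F : X × X → Y × Y → ℝ≥0∞} (hF : Measurable (Function.uncurry F)) :
    ∫⁻ x1, ∫⁻ y1, ∫⁻ x2, ∫⁻ y2, F (x1, y1) (x2, y2) ∂ν2 ∂μ2 ∂ν1 ∂μ1 =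
      ∫⁻ x2, ∫⁻ y2, ∫⁻ x1, ∫⁻ y1, F (x1, y1) (x2, y2) ∂ν1 ∂μ1 ∂ν2 ∂μ2 := by
  have h1 : ∀ p, ∫⁻ x2, ∫⁻ y2, F p (x2, y2) ∂ν2 ∂μ2 = ∫⁻ q, F p q ∂(μ2.prod ν2) := fun p => by
    rw [lintegral_prod _ (by fun_prop)]
  have h2 : ∀ q, ∫⁻ x1, ∫⁻ y1, F (x1, y1) q ∂ν1 ∂μ1 = ∫⁻ p, F p q ∂(μ1.prod ν1) := fun q => by
    rw [lintegral_prod _ (by fun_prop)]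
  simp_rw [h1, h2]
  rw [← lintegral_prod (fun p => ∫⁻ q, F p q ∂(μ2.prod ν2)) (by fun_prop),
    ← lintegral_prod (fun q => ∫⁻ p, F p q ∂(μ1.prod ν1)) (by fun_prop)]
  exact lintegral_lintegral_swap (by fun_prop)

lemma measurable_dd {b : X × Y → ℂ} (hb : Measurable b) :
    Measurable (Function.uncurry fun (p : X × X) (q : Y × Y) => dd b p.1 p.2 q.1 q.2) := by
  unfold dd Function.uncurry
  fun_prop

lemma ddMean_swap_snd {b : X × Y → ℂ} (hb : Measurable b) (μ1 ν1 : Measure X) (μ2 ν2 : Measure Y)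
    [SFinite μ2] [SFinite ν2] :
    ddMean b μ1 ν1 ν2 μ2 = ddMean b μ1 ν1 μ2 ν2 := by
  unfold ddMean
  refine lintegral_congr fun x1 => lintegral_congr fun y1 => ?_
  rw [lintegral_lintegral_swap (by unfold dd Function.uncurry; fun_prop)]
  refine lintegral_congr fun x2 => lintegral_congr fun y2 => ?_
  rw [← enorm_neg]; congr 1; unfold dd; ring

lemma ddMean_swap_fst {b : X × Y → ℂ} (hb : Measurable b) (μ1 ν1 : Measure X) (μ2 ν2 : Measure Y)
    [SFinite μ1] [SFinite ν1] [SFinite μ2] [SFinite ν2] :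
    ddMean b ν1 μ1 μ2 ν2 = ddMean b μ1 ν1 μ2 ν2 := by
  unfold ddMean
  rw [lintegral_lintegral_swap]
  · refine lintegral_congr fun x1 => lintegral_congr fun y1 =>
      lintegral_congr fun x2 => lintegral_congr fun y2 => ?_
    rw [← enorm_neg]; congr 1; unfold dd; ring
  · refine Measurable.aemeasurable ?_
    unfold dd Function.uncurry
    fun_prop

lemma ddMean_self_le {b : X × Y → ℂ} (hb : Measurable b) (μ1 ν1 : Measure X) (μ2 ν2 : Measure Y)
    [IsProbabilityMeasure μ1] [IsProbabilityMeasure ν1]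
    [IsProbabilityMeasure μ2] [IsProbabilityMeasure ν2] :
    ddMean b μ1 μ1 μ2 μ2 ≤ 4 * ddMean b μ1 ν1 μ2 ν2 := by
  have hd := measurable_dd hb
  have hF : Measurable (Function.uncurry fun (p : X × X) (q : Y × Y) =>
      ‖dd b p.1 p.2 q.1 q.2‖ₑ) := hd.enorm
  have h1 : ddMean b μ1 μ1 μ2 μ2 ≤ 2 * ddMean b μ1 μ1 μ2 ν2 := by
    unfold ddMean
    calc _ ≤ ∫⁻ x1, ∫⁻ y1, 2 * ∫⁻ x2, ∫⁻ y2, ‖dd b x1 y1 x2 y2‖ₑ ∂ν2 ∂μ2 ∂μ1 ∂μ1 := by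
          refine lintegral_mono fun x1 => lintegral_mono fun y1 => ?_
          have := lintegral_diff_self_le (μ := μ2) (ν := ν2)
            (φ := fun z => b (x1, z) - b (y1, z)) (by fun_prop)
          simpa only [dd_eq_snd] using this
      _ = _ := by
          simp_rw [lintegral_const_mul' _ _ ENNReal.ofNat_ne_top]
  have h2 : ddMean b μ1 μ1 μ2 ν2 ≤ 2 * ddMean b μ1 ν1 μ2 ν2 := by
    unfold ddMean
    rw [lintegral_swap4 hF, lintegral_swap4 hF]
    calc _ ≤ ∫⁻ x2, ∫⁻ y2, 2 * ∫⁻ x1, ∫⁻ y1, ‖dd b x1 y1 x2 y2‖ₑ ∂ν1 ∂μ1 ∂ν2 ∂μ2 := by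
          refine lintegral_mono fun x1 => lintegral_mono fun y1 => ?_
          have := lintegral_diff_self_le (μ := μ1) (ν := ν1)
            (φ := fun z => b (z, x1) - b (z, y1)) (by fun_prop)
          simpa only [dd_eq_fst] using this
      _ = _ := by
          simp_rw [lintegral_const_mul' _ _ ENNReal.ofNat_ne_top]
  calc _ ≤ _ := h1
    _ ≤ 2 * (2 * ddMean b μ1 ν1 μ2 ν2) := by gcongr
    _ = _ := by rw [← mul_assoc]; norm_num

/-- `lintegral_diff_le` in the second parameter, the first one being already averaged. -/
lemma lintegral_avg_dd_le {b : X × Y → ℂ} (hb : Measurable b) {μ1 ν1 : Measure X}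
    {μ2 ν2 : Measure Y} [IsProbabilityMeasure μ1] [IsProbabilityMeasure ν1]
    [IsProbabilityMeasure μ2] [IsProbabilityMeasure ν2]
    (h11 : Integrable b (μ1.prod μ2)) (h12 : Integrable b (μ1.prod ν2))
    (h21 : Integrable b (ν1.prod μ2)) (h22 : Integrable b (ν1.prod ν2)) :
    ∫⁻ x1, ∫⁻ x2, ∫⁻ y2, ‖∫ y1, dd b x1 y1 x2 y2 ∂ν1‖ₑ ∂ν2 ∂μ2 ∂μ1 ≤
      2 * ddAvgNorm b μ1 ν1 μ2 ν2 + ddAvgNorm b μ1 ν1 ν2 μ2 := by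
  have hψm : Measurable fun z => ∫ y1, b (y1, z) ∂ν1 :=
    (hb.stronglyMeasurable.integral_prod_left' (μ := ν1)).measurable
  have hm1 : Measurable fun x1 => ∫⁻ x2, ‖∫ y2, ∫ y1, dd b x1 y1 x2 y2 ∂ν1 ∂ν2‖ₑ ∂μ2 := by
    refine Measurable.lintegral_prod_right'
      (f := fun p : X × Y => ‖∫ y2, ∫ y1, dd b p.1 y1 p.2 y2 ∂ν1 ∂ν2‖ₑ) ?_
    refine Measurable.enorm ?_
    refine (StronglyMeasurable.integral_prod_right'
      (f := fun q : (X × Y) × Y => ∫ y1, dd b q.1.1 y1 q.1.2 q.2 ∂ν1) ?_).measurable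
    refine (StronglyMeasurable.integral_prod_right'
      (f := fun q : ((X × Y) × Y) × X => dd b q.1.1.1 q.2 q.1.1.2 q.1.2) ?_)
    refine Measurable.stronglyMeasurable ?_
    unfold dd; fun_prop
  unfold ddAvgNorm
  rw [← lintegral_const_mul' _ _ ENNReal.ofNat_ne_top, ← lintegral_add_left (hm1.const_mul _)]
  refine lintegral_mono_ae ?_
  have hs1 : ∀ᵐ z ∂μ2, Integrable (fun y1 => b (y1, z)) ν1 := h21.prod_left_ae
  have hs2 : ∀ᵐ z ∂ν2, Integrable (fun y1 => b (y1, z)) ν1 := h22.prod_left_ae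
  filter_upwards [h11.prod_right_ae, h12.prod_right_ae] with x1 hx1 hx2
  have hdd : ∀ x2 y2, Integrable (fun y1 => b (y1, x2)) ν1 → Integrable (fun y1 => b (y1, y2)) ν1 →
      ∫ y1, dd b x1 y1 x2 y2 ∂ν1 =
        (b (x1, x2) - ∫ y1, b (y1, x2) ∂ν1) - (b (x1, y2) - ∫ y1, b (y1, y2) ∂ν1) := by
    intro x2 y2 h hyy
    simp_rw [dd_eq_snd]
    rw [integral_sub, integral_sub, integral_sub]
    · simp
    all_goals first | exact integrable_const _ | assumption | skip
    · exact (integrable_const _).sub h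
    · exact (integrable_const _).sub hyy
  have key := lintegral_diff_le (μ := μ2) (ν := ν2)
    (φ := fun z => b (x1, z) - ∫ y1, b (y1, z) ∂ν1)
    (hx1.sub h21.integral_prod_right) (hx2.sub h22.integral_prod_right)
  convert key using 1
  · refine lintegral_congr_ae ?_
    filter_upwards [hs1] with x2 h
    refine lintegral_congr_ae ?_
    filter_upwards [hs2] with y2 hyy
    rw [hdd x2 y2 h hyy]
  · congr 1
    · congr 1
      refine lintegral_congr_ae ?_
      filter_upwards [hs1] with x2 h
      congr 1
      refine integral_congr_ae ?_
      filter_upwards [hs2] with y2 hyy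
      rw [hdd x2 y2 h hyy]
    · refine lintegral_congr_ae ?_
      filter_upwards [hs2] with x2 h
      congr 1
      refine integral_congr_ae ?_
      filter_upwards [hs1] with y2 hyy
      rw [hdd x2 y2 h hyy]

/-- The mean double difference is controlled by the four one-sided averages, one for each way of
choosing, in each parameter, which of the two points is averaged out. -/
lemma ddMean_le {b : X × Y → ℂ} (hb : Measurable b) {μ1 ν1 : Measure X}
    {μ2 ν2 : Measure Y} [IsProbabilityMeasure μ1] [IsProbabilityMeasure ν1]
    [IsProbabilityMeasure μ2] [IsProbabilityMeasure ν2]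
    (h11 : Integrable b (μ1.prod μ2)) (h12 : Integrable b (μ1.prod ν2))
    (h21 : Integrable b (ν1.prod μ2)) (h22 : Integrable b (ν1.prod ν2)) :
    ddMean b μ1 ν1 μ2 ν2 ≤
      2 * (2 * ddAvgNorm b μ1 ν1 μ2 ν2 + ddAvgNorm b μ1 ν1 ν2 μ2) +
        (2 * ddAvgNorm b ν1 μ1 μ2 ν2 + ddAvgNorm b ν1 μ1 ν2 μ2) := by
  have hF : Measurable (Function.uncurry fun (p : X × X) (q : Y × Y) =>
      ‖dd b p.1 p.2 q.1 q.2‖ₑ) := (measurable_dd hb).enorm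
  have hG : ∀ (ρ : Measure X) [SFinite ρ], Measurable fun p : (Y × Y) × X =>
      ‖∫ y1, dd b p.2 y1 p.1.1 p.1.2 ∂ρ‖ₑ := by
    intro ρ _
    refine Measurable.enorm (StronglyMeasurable.integral_prod_right'
      (f := fun q : ((Y × Y) × X) × X => dd b q.1.2 q.2 q.1.1.1 q.1.1.2) ?_).measurable
    refine Measurable.stronglyMeasurable ?_
    unfold dd; fun_prop
  have hsw : ∀ (ρ σ : Measure X) [SFinite ρ] [SFinite σ],
      ∫⁻ x2, ∫⁻ y2, ∫⁻ x1, ‖∫ y1, dd b x1 y1 x2 y2 ∂ρ‖ₑ ∂σ ∂ν2 ∂μ2 =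
      ∫⁻ x1, ∫⁻ x2, ∫⁻ y2, ‖∫ y1, dd b x1 y1 x2 y2 ∂ρ‖ₑ ∂ν2 ∂μ2 ∂σ := by
    intro ρ σ _ _
    have hg := hG ρ
    have e1 : ∀ x1, ∫⁻ x2, ∫⁻ y2, ‖∫ y1, dd b x1 y1 x2 y2 ∂ρ‖ₑ ∂ν2 ∂μ2 =
        ∫⁻ q, ‖∫ y1, dd b x1 y1 q.1 q.2 ∂ρ‖ₑ ∂(μ2.prod ν2) := by
      intro x1
      rw [lintegral_prod]
      exact (hg.comp (measurable_id.prodMk measurable_const)).aemeasurable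
    simp_rw [e1]
    symm
    rw [lintegral_lintegral_swap, lintegral_prod]
    · exact (Measurable.lintegral_prod_right' hg).aemeasurable
    · exact (hg.comp measurable_swap).aemeasurable
  have hs1 : ∀ᵐ z ∂μ2, Integrable (fun y1 => b (y1, z)) μ1 := h11.prod_left_ae
  have hs2 : ∀ᵐ z ∂ν2, Integrable (fun y1 => b (y1, z)) μ1 := h12.prod_left_ae
  have hs3 : ∀ᵐ z ∂μ2, Integrable (fun y1 => b (y1, z)) ν1 := h21.prod_left_ae
  have hs4 : ∀ᵐ z ∂ν2, Integrable (fun y1 => b (y1, z)) ν1 := h22.prod_left_ae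
  have hmeas1 : Measurable fun q : Y × Y => ∫⁻ x1, ‖∫ y1, dd b x1 y1 q.1 q.2 ∂ν1‖ₑ ∂μ1 :=
    Measurable.lintegral_prod_right' (hG ν1)
  calc ddMean b μ1 ν1 μ2 ν2
      = ∫⁻ x2, ∫⁻ y2, ∫⁻ x1, ∫⁻ y1, ‖dd b x1 y1 x2 y2‖ₑ ∂ν1 ∂μ1 ∂ν2 ∂μ2 := lintegral_swap4 hF
    _ ≤ ∫⁻ x2, ∫⁻ y2, (2 * (∫⁻ x1, ‖∫ y1, dd b x1 y1 x2 y2 ∂ν1‖ₑ ∂μ1) +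
          ∫⁻ x1, ‖∫ y1, dd b x1 y1 x2 y2 ∂μ1‖ₑ ∂ν1) ∂ν2 ∂μ2 := by
        refine lintegral_mono_ae ?_
        filter_upwards [hs1, hs3] with x2 a1 a3
        refine lintegral_mono_ae ?_
        filter_upwards [hs2, hs4] with y2 a2 a4
        simpa only [dd_eq_fst] using lintegral_diff_le (φ := fun z => b (z, x2) - b (z, y2))
          (a1.sub a2) (a3.sub a4)
    _ = 2 * (∫⁻ x2, ∫⁻ y2, ∫⁻ x1, ‖∫ y1, dd b x1 y1 x2 y2 ∂ν1‖ₑ ∂μ1 ∂ν2 ∂μ2) +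
          ∫⁻ x2, ∫⁻ y2, ∫⁻ x1, ‖∫ y1, dd b x1 y1 x2 y2 ∂μ1‖ₑ ∂ν1 ∂ν2 ∂μ2 := by
        rw [← lintegral_const_mul' _ _ ENNReal.ofNat_ne_top, ← lintegral_add_left]
        · refine lintegral_congr fun x2 => ?_
          rw [← lintegral_const_mul' _ _ ENNReal.ofNat_ne_top, ← lintegral_add_left]
          exact (hmeas1.comp (measurable_const.prodMk measurable_id)).const_mul _
        · exact (Measurable.lintegral_prod_right' hmeas1).const_mul _
    _ ≤ _ := by
        rw [hsw, hsw]
        gcongr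
        · exact lintegral_avg_dd_le hb h11 h12 h21 h22
        · exact lintegral_avg_dd_le hb h21 h22 h11 h12

/-! ### Duality against a nearly constant kernel -/

/-- Duality with a nearly constant kernel: testing the kernel `κ` against a single function
`g` of `x` with `‖g‖ ≤ 1` recovers the `L¹` norm of the `y`-average of `F`, up to an error governed by the
relative oscillation `ε` of `κ`. -/
lemma exists_test_function {μ : Measure X} {ν : Measure Y} [IsProbabilityMeasure μ]
    [IsProbabilityMeasure ν] {F κ : X × Y → ℂ} (hFm : Measurable F)
    (hF : Integrable F (μ.prod ν)) (hκ : AEStronglyMeasurable κ (μ.prod ν)) {k : ℂ} {ε : ℝ}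
    (hk : ∀ᵐ p ∂(μ.prod ν), ‖κ p - k‖ ≤ ε * ‖k‖) :
    ∃ g : X → ℂ, Measurable g ∧ (∀ x, ‖g x‖ ≤ 1) ∧
      ‖k‖ₑ * ∫⁻ x, ‖∫ y, F (x, y) ∂ν‖ₑ ∂μ ≤
        ‖∫ x, ∫ y, F (x, y) * κ (x, y) * g x ∂ν ∂μ‖ₑ +
          ENNReal.ofReal ε * ‖k‖ₑ * ∫⁻ x, ∫⁻ y, ‖F (x, y)‖ₑ ∂ν ∂μ := by
  set h : X → ℂ := fun x => ∫ y, F (x, y) ∂ν with hh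
  have hhm : Measurable h := (hFm.stronglyMeasurable.integral_prod_right' (ν := ν)).measurable
  have hhi : Integrable h μ := hF.integral_prod_left
  set g : X → ℂ := fun x => (starRingEnd ℂ) (h x) / (‖h x‖ : ℂ) with hg
  have hgm : Measurable g := by
    have : Measurable (starRingEnd ℂ) := Complex.continuous_conj.measurable
    fun_prop
  have hg1 : ∀ x, ‖g x‖ ≤ 1 := by
    intro x
    simp only [hg, norm_div, RCLike.norm_conj, Complex.norm_real, norm_norm]
    exact div_self_le_one _
  have hgh : ∀ x, h x * g x = (‖h x‖ : ℂ) := by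
    intro x
    simp only [hg]
    by_cases h0 : h x = 0
    · simp [h0]
    · have : (‖h x‖ : ℂ) ≠ 0 := by simpa using h0
      field_simp
      rw [Complex.mul_conj, Complex.normSq_eq_norm_sq]; push_cast; ring
  refine ⟨g, hgm, hg1, ?_⟩
  have hgb : ∀ᵐ p ∂(μ.prod ν), ‖g p.1‖ ≤ 1 := Filter.Eventually.of_forall fun p => hg1 _
  have hgs : AEStronglyMeasurable (fun p : X × Y => g p.1) (μ.prod ν) :=
    (hgm.comp measurable_fst).aestronglyMeasurable
  have hdκ : Integrable (fun p => F p * (k - κ p)) (μ.prod ν) := by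
    refine hF.mul_bdd (c := ε * ‖k‖) (aestronglyMeasurable_const.sub hκ) ?_
    filter_upwards [hk] with p hp
    rwa [norm_sub_rev]
  have hFk : Integrable (fun p => F p * k) (μ.prod ν) := hF.mul_const k
  have hFκ : Integrable (fun p => F p * κ p) (μ.prod ν) := by
    have := hFk.sub hdκ
    refine this.congr (Filter.Eventually.of_forall fun p => ?_)
    simp only [Pi.sub_apply]; ring
  have i1 : Integrable (fun p : X × Y => F p * κ p * g p.1) (μ.prod ν) := hFκ.mul_bdd hgs hgb
  have i2 : Integrable (fun p : X × Y => F p * (k - κ p) * g p.1) (μ.prod ν) := hdκ.mul_bdd hgs hgb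
  have e1 : ‖k‖ₑ * ∫⁻ x, ‖h x‖ₑ ∂μ =
      ‖∫ p, (F p * κ p * g p.1 + F p * (k - κ p) * g p.1) ∂(μ.prod ν)‖ₑ := by
    rw [integral_prod (fun p => F p * κ p * g p.1 + F p * (k - κ p) * g p.1) (i1.add i2)]
    have : ∀ x, ∫ y, (F (x, y) * κ (x, y) * g x + F (x, y) * (k - κ (x, y)) * g x) ∂ν =
        k * (‖h x‖ : ℂ) := by
      intro x
      rw [← hgh x, hh]
      simp only
      rw [← integral_mul_const, ← integral_const_mul]
      congr 1; ext y; ring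
    simp_rw [this]
    rw [integral_const_mul, enorm_mul, integral_complex_ofReal, ← ofReal_integral_norm_eq_lintegral_enorm hhi,
      ← ofReal_norm (_ : ℂ), ← ofReal_norm (_ : ℂ), Complex.norm_real, Real.norm_of_nonneg]
    exact integral_nonneg fun x => norm_nonneg _
  rw [e1, integral_add i1 i2, integral_prod _ i1]
  refine (enorm_add_le _ _).trans (add_le_add le_rfl ?_)
  refine (enorm_integral_le_lintegral_enorm _).trans ?_
  rw [← lintegral_prod (fun p => ‖F p‖ₑ) (by fun_prop), ← lintegral_const_mul _ (by fun_prop)]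
  refine lintegral_mono_ae ?_
  filter_upwards [hk] with p hp
  rw [enorm_mul, enorm_mul]
  have a1 : ‖g p.1‖ₑ ≤ 1 := by
    rw [← ofReal_norm]; exact ENNReal.ofReal_le_one.2 (hg1 _)
  have a2 : ‖k - κ p‖ₑ ≤ ENNReal.ofReal ε * ‖k‖ₑ := by
    rw [← ofReal_norm, ← ofReal_norm, ← ENNReal.ofReal_mul' (norm_nonneg _), norm_sub_rev]
    exact ENNReal.ofReal_le_ofReal hp
  calc _ ≤ ‖F p‖ₑ * (ENNReal.ofReal ε * ‖k‖ₑ) * 1 := by gcongr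
    _ = _ := by ring

lemma integrable_dd {b : X × Y → ℂ} {μ1 ν1 : Measure X}
    {μ2 ν2 : Measure Y} [IsProbabilityMeasure μ1] [IsProbabilityMeasure ν1]
    [IsProbabilityMeasure μ2] [IsProbabilityMeasure ν2]
    (h11 : Integrable b (μ1.prod μ2)) (h12 : Integrable b (μ1.prod ν2))
    (h21 : Integrable b (ν1.prod μ2)) (h22 : Integrable b (ν1.prod ν2)) :
    Integrable (fun p : (X × Y) × (X × Y) => dd b p.1.1 p.2.1 p.1.2 p.2.2)
      ((μ1.prod μ2).prod (ν1.prod ν2)) := by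
  have m1 : MeasurePreserving (Prod.fst : (X × Y) × (X × Y) → X × Y)
    ((μ1.prod μ2).prod (ν1.prod ν2)) (μ1.prod μ2) := measurePreserving_fst
  have m2 : MeasurePreserving (Prod.snd : (X × Y) × (X × Y) → X × Y)
    ((μ1.prod μ2).prod (ν1.prod ν2)) (ν1.prod ν2) := measurePreserving_snd
  have m3 : MeasurePreserving (Prod.map Prod.fst Prod.snd : (X × Y) × (X × Y) → X × Y)
    ((μ1.prod μ2).prod (ν1.prod ν2)) (μ1.prod ν2) :=
    MeasurePreserving.prod measurePreserving_fst measurePreserving_snd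
  have m4 : MeasurePreserving (Prod.map Prod.fst Prod.snd ∘ Prod.swap :
      (X × Y) × (X × Y) → X × Y) ((μ1.prod μ2).prod (ν1.prod ν2)) (ν1.prod μ2) :=
    (MeasurePreserving.prod measurePreserving_fst measurePreserving_snd).comp
      Measure.measurePreserving_swap
  have := (((m1.integrable_comp_of_integrable h11).sub (m3.integrable_comp_of_integrable h12)).sub
    (m4.integrable_comp_of_integrable h21)).add (m2.integrable_comp_of_integrable h22)
  exact this

/-- `ddMean` as an integral over pairs of points of the product space. -/
lemma ddMean_eq {b : X × Y → ℂ} (hb : Measurable b) (μ1 ν1 : Measure X) (μ2 ν2 : Measure Y)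
    [SFinite μ1] [SFinite ν1] [SFinite μ2] [SFinite ν2] :
    ddMean b μ1 ν1 μ2 ν2 =
      ∫⁻ x, ∫⁻ y, ‖dd b x.1 y.1 x.2 y.2‖ₑ ∂(ν1.prod ν2) ∂(μ1.prod μ2) := by
  have hd : Measurable fun p : (X × Y) × (X × Y) => ‖dd b p.1.1 p.2.1 p.1.2 p.2.2‖ₑ := by
    unfold dd; fun_prop
  rw [lintegral_prod _ (Measurable.lintegral_prod_right' hd).aemeasurable]
  unfold ddMean
  refine lintegral_congr fun x1 => ?_
  have : ∀ x2 : Y, ∫⁻ y, ‖dd b x1 y.1 x2 y.2‖ₑ ∂(ν1.prod ν2) =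
      ∫⁻ y1, ∫⁻ y2, ‖dd b x1 y1 x2 y2‖ₑ ∂ν2 ∂ν1 := by
    intro x2
    rw [lintegral_prod]
    unfold dd; fun_prop
  simp_rw [this]
  rw [lintegral_lintegral_swap]
  refine Measurable.aemeasurable ?_
  unfold dd Function.uncurry
  fun_prop

/-- `ddAvgNorm` as an integral over pairs of points of the product space. -/
lemma ddAvgNorm_eq {b : X × Y → ℂ} (hb : Measurable b) {μ1 ν1 : Measure X}
    {μ2 ν2 : Measure Y} [IsProbabilityMeasure μ1] [IsProbabilityMeasure ν1]
    [IsProbabilityMeasure μ2] [IsProbabilityMeasure ν2]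
    (h11 : Integrable b (μ1.prod μ2)) (h12 : Integrable b (μ1.prod ν2))
    (h21 : Integrable b (ν1.prod μ2)) (h22 : Integrable b (ν1.prod ν2)) :
    ddAvgNorm b μ1 ν1 μ2 ν2 =
      ∫⁻ x, ‖∫ y, dd b x.1 y.1 x.2 y.2 ∂(ν1.prod ν2)‖ₑ ∂(μ1.prod μ2) := by
  have hm : Measurable fun x : X × Y => ‖∫ y2, ∫ y1, dd b x.1 y1 x.2 y2 ∂ν1 ∂ν2‖ₑ := by
    refine Measurable.enorm ?_
    refine (StronglyMeasurable.integral_prod_right'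
      (f := fun q : (X × Y) × Y => ∫ y1, dd b q.1.1 y1 q.1.2 q.2 ∂ν1) ?_).measurable
    refine (StronglyMeasurable.integral_prod_right'
      (f := fun q : ((X × Y) × Y) × X => dd b q.1.1.1 q.2 q.1.1.2 q.1.2) ?_)
    refine Measurable.stronglyMeasurable ?_
    unfold dd; fun_prop
  unfold ddAvgNorm
  rw [← lintegral_prod (fun x : X × Y => ‖∫ y2, ∫ y1, dd b x.1 y1 x.2 y2 ∂ν1 ∂ν2‖ₑ)
    hm.aemeasurable]
  refine lintegral_congr_ae ?_
  filter_upwards [(integrable_dd h11 h12 h21 h22).prod_right_ae] with x hx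
  rw [integral_prod_symm _ hx]

end Abstract

/-! ### Cubes, kernels and companion cubes -/

section Geometry

variable {n : ℕ}

lemma Cube.carrier_eq (I : Cube n) :
    I.carrier = (WithLp.ofLp : Euc n → Fin n → ℝ) ⁻¹'
      (Icc (fun i => I.center i - I.side / 2) (fun i => I.center i + I.side / 2)) := by
  ext x
  simp only [Cube.carrier, mem_ofPred_eq, mem_preimage, mem_Icc, abs_le, Pi.le_def,
    ← forall_and]
  refine forall_congr' fun i => ?_
  constructor <;> rintro ⟨h1, h2⟩ <;> constructor <;> linarith

lemma Cube.measurableSet (I : Cube n) : MeasurableSet I.carrier := by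
  rw [I.carrier_eq]
  exact (PiLp.volume_preserving_ofLp (Fin n)).measurable measurableSet_Icc

lemma Cube.volume_carrier (I : Cube n) : volume I.carrier = ENNReal.ofReal (I.side ^ n) := by
  rw [I.carrier_eq, (PiLp.volume_preserving_ofLp (Fin n)).measure_preimage
    measurableSet_Icc.nullMeasurableSet, Real.volume_Icc_pi]
  simp only [add_sub_sub_cancel, add_halves, Finset.prod_const, Finset.card_univ, Fintype.card_fin]
  rw [ENNReal.ofReal_pow I.side_pos.le]

lemma Cube.center_mem (I : Cube n) : I.center ∈ I.carrier := by
  intro i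
  have := I.side_pos
  simp only [sub_self, abs_zero]
  positivity

lemma Cube.dist_center_le (hn : 1 ≤ n) (I : Cube n) {x : Euc n} (hx : x ∈ I.carrier) :
    dist x I.center ≤ n * I.side / 2 := by
  have hn' : (1 : ℝ) ≤ n := by exact_mod_cast hn
  have hs := I.side_pos
  rw [EuclideanSpace.dist_eq, Real.sqrt_le_left (by positivity)]
  calc ∑ i, dist (x i) (I.center i) ^ 2 ≤ ∑ _i : Fin n, (I.side / 2) ^ 2 := by
        refine Finset.sum_le_sum fun i _ => ?_
        rw [Real.dist_eq]
        exact pow_le_pow_left₀ (abs_nonneg _) (hx i) 2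
    _ = n * (I.side / 2) ^ 2 := by simp
    _ ≤ (n * I.side / 2) ^ 2 := by
        have : (n : ℝ) ≤ n ^ 2 := by nlinarith
        calc _ ≤ (n : ℝ) ^ 2 * (I.side / 2) ^ 2 := by gcongr
          _ = _ := by ring

/-- A Calderón–Zygmund kernel is nearly constant on a product of two balls that are small
compared to their distance. -/
lemma IsCZKernel.norm_sub_le {α CK : ℝ} (hα : 0 < α) (hα1 : α ≤ 1) (hCK : 0 ≤ CK)
    {K : Euc n → Euc n → ℂ} (hK : IsCZKernel n α CK K) {x0 y0 x y : Euc n} {ρ : ℝ}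
    (hd : 0 < dist x0 y0) (hx : dist x0 x ≤ ρ) (hy : dist y0 y ≤ ρ) (hρ : ρ ≤ dist x0 y0 / 4) :
    ‖K x y - K x0 y0‖ ≤ CK * 2 ^ (n + 2) * ρ ^ α / dist x0 y0 ^ ((n : ℝ) + α) := by
  set d := dist x0 y0 with hdd
  have hρ0 : 0 ≤ ρ := dist_nonneg.trans hx
  have h1 : d / 2 ≤ dist x0 y := by
    have := dist_triangle x0 y y0
    rw [dist_comm y y0] at this
    linarith
  have a1 := hK.2 x0 x y (dist_pos.1 (by linarith)) (by linarith)
  have a2 := hK.2 y0 y x0 (by rw [← dist_pos, dist_comm]; exact hd)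
    (by rw [dist_comm y0 x0]; linarith)
  rw [dist_comm y0 x0, ← hdd] at a2
  have b1 : CK * dist x0 x ^ α / dist x0 y ^ ((n : ℝ) + α) ≤
      CK * ρ ^ α * 2 ^ (n + 1) / d ^ ((n : ℝ) + α) := by
    calc _ ≤ CK * ρ ^ α / (d / 2) ^ ((n : ℝ) + α) := by gcongr
      _ = CK * ρ ^ α * 2 ^ ((n : ℝ) + α) / d ^ ((n : ℝ) + α) := by
        rw [Real.div_rpow hd.le (by norm_num)]; field_simp
      _ ≤ CK * ρ ^ α * 2 ^ ((n + 1 : ℕ) : ℝ) / d ^ ((n : ℝ) + α) := by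
        have : (2 : ℝ) ^ ((n : ℝ) + α) ≤ 2 ^ ((n + 1 : ℕ) : ℝ) := by
          apply Real.rpow_le_rpow_of_exponent_le (by norm_num)
          push_cast; linarith
        gcongr
      _ = _ := by rw [Real.rpow_natCast]
  have b2 : CK * dist y0 y ^ α / d ^ ((n : ℝ) + α) ≤
      CK * ρ ^ α * 2 ^ (n + 1) / d ^ ((n : ℝ) + α) := by
    calc _ ≤ CK * ρ ^ α / d ^ ((n : ℝ) + α) := by gcongr
      _ = CK * ρ ^ α * 1 / d ^ ((n : ℝ) + α) := by rw [mul_one]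
      _ ≤ _ := by
        have : (1 : ℝ) ≤ 2 ^ (n + 1) := one_le_pow₀ (by norm_num)
        gcongr
  have c1 : ‖K x y - K x0 y‖ ≤ CK * ρ ^ α * 2 ^ (n + 1) / d ^ ((n : ℝ) + α) := by
    rw [norm_sub_rev]
    linarith [norm_nonneg (K y x0 - K y x)]
  have c2 : ‖K x0 y - K x0 y0‖ ≤ CK * ρ ^ α * 2 ^ (n + 1) / d ^ ((n : ℝ) + α) := by
    rw [norm_sub_rev]
    linarith [norm_nonneg (K y0 x0 - K y x0)]
  calc ‖K x y - K x0 y0‖ ≤ ‖K x y - K x0 y‖ + ‖K x0 y - K x0 y0‖ := by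
        simpa using norm_add_le (K x y - K x0 y) (K x0 y - K x0 y0)
    _ ≤ _ := add_le_add c1 c2
    _ = _ := by ring

/-- Every cube `I` has a companion cube `J` of the same size, at distance comparable to the side
length, such that `K` is close to a constant of size about `|I|⁻¹` both on `I × J` and on
`J × I`. -/
lemma exists_companion (hn : 1 ≤ n) {α CK c₀ ε : ℝ} (hα : 0 < α) (hα1 : α ≤ 1) (hCK : 0 ≤ CK)
    (hc₀ : 0 < c₀) (hε : 0 < ε) :
    ∃ D c2 : ℝ, 0 < D ∧ 1 ≤ c2 ∧ ∀ K : Euc n → Euc n → ℂ, IsCZKernel n α CK K →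
      SymNonDeg n c₀ K → ∀ I : Cube n, ∃ J : Cube n, J.side = I.side ∧
        (∀ x ∈ I.carrier, ∀ y ∈ J.carrier, I.side ≤ dist x y) ∧
        dist I.center J.center ≤ c2 * I.side ∧
        ∃ k k' : ℂ, 1 ≤ D * I.side ^ n * ‖k‖ ∧ 1 ≤ D * I.side ^ n * ‖k'‖ ∧
          ∀ x ∈ I.carrier, ∀ y ∈ J.carrier,
            ‖K x y - k‖ ≤ ε * ‖k‖ ∧ ‖K y x - k'‖ ≤ ε * ‖k'‖ := by
  have hn' : (1 : ℝ) ≤ n := by exact_mod_cast hn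
  -- `A` is the separation relative to the side length, large enough to make `K` vary little.
  obtain ⟨A, hA, hAε⟩ : ∃ A : ℝ, 2 * n + 1 ≤ A ∧ CK * 2 ^ (n + 2) * c₀ * (n / A) ^ α ≤ ε := by
    have h1 : Filter.Tendsto (fun A : ℝ => CK * 2 ^ (n + 2) * c₀ * (n / A) ^ α) Filter.atTop
        (nhds (CK * 2 ^ (n + 2) * c₀ * 0 ^ α)) :=
      ((Filter.Tendsto.const_div_atTop Filter.tendsto_id _).rpow_const (Or.inr hα.le)).const_mul _
    rw [Real.zero_rpow hα.ne', mul_zero] at h1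
    obtain ⟨A, h2, h3⟩ := ((h1.eventually (gt_mem_nhds hε)).and
      (Filter.eventually_ge_atTop (2 * n + 1 : ℝ))).exists
    exact ⟨A, h3, h2.le⟩
  have hA0 : 0 < A := by linarith
  refine ⟨c₀ * A ^ n, max 1 (CK * c₀ * A), by positivity, le_max_left _ _, ?_⟩
  intro K hK hN I
  have hl := I.side_pos
  have hr : 0 < A * I.side := by positivity
  obtain ⟨x0, hx0, hk', hk⟩ := hN I.center (A * I.side) hr
  rw [Real.rpow_natCast] at hk hk'
  have hd : 0 < dist x0 I.center := hr.trans_le hx0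
  have hρ : (n : ℝ) * I.side / 2 ≤ dist x0 I.center / 4 := by nlinarith
  -- Non-degeneracy against the size bound keeps the companion from being too far away.
  have hup : dist x0 I.center ≤ CK * c₀ * A * I.side := by
    have h1 := hK.1 x0 I.center (dist_pos.1 hd)
    rw [Real.rpow_natCast] at h1
    have h2 := hk'.trans h1
    rw [div_le_div_iff₀ (by positivity) (by positivity), one_mul] at h2
    set t := dist x0 I.center / (A * I.side) with ht
    have ht1 : 1 ≤ t := (one_le_div hr).2 hx0
    have h3 : t ^ n ≤ CK * c₀ := by
      rw [ht, div_pow, div_le_iff₀ (by positivity)]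
      linarith
    have h4 : t ≤ CK * c₀ := (le_self_pow₀ ht1 (by omega)).trans h3
    rw [ht, div_le_iff₀ hr] at h4
    linarith
  refine ⟨⟨x0, I.side, I.side_pos⟩, rfl, ?_, ?_, K I.center x0, K x0 I.center, ?_, ?_, ?_⟩
  · intro x hx y hy
    have e1 := I.dist_center_le hn hx
    have e2 := Cube.dist_center_le hn _ hy
    simp only at e2
    have e3 := dist_triangle4 x0 y x I.center
    rw [dist_comm x0 y, dist_comm y x] at e3
    nlinarith
  · rw [dist_comm]
    refine hup.trans ?_
    gcongr
    exact le_max_right _ _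
  · rw [div_le_iff₀ (by positivity), mul_pow] at hk
    linarith
  · rw [div_le_iff₀ (by positivity), mul_pow] at hk'
    linarith
  · intro x hx y hy
    have e1 := I.dist_center_le hn hx
    have e2 := Cube.dist_center_le hn _ hy
    simp only at e2
    rw [dist_comm] at e1 e2
    have main : ∀ κ : ℝ, 1 / (c₀ * (A * I.side) ^ n) ≤ κ →
        CK * 2 ^ (n + 2) * (n * I.side / 2) ^ α / dist x0 I.center ^ ((n : ℝ) + α) ≤ ε * κ := by
      intro κ hκ
      have hκ' : 1 / (A * I.side) ^ n ≤ c₀ * κ := by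
        rw [div_le_iff₀ (by positivity)] at hκ ⊢
        linarith
      calc CK * 2 ^ (n + 2) * (n * I.side / 2) ^ α / dist x0 I.center ^ ((n : ℝ) + α)
          ≤ CK * 2 ^ (n + 2) * (n * I.side) ^ α / (A * I.side) ^ ((n : ℝ) + α) := by
            gcongr
            exact half_le_self (by positivity)
        _ = CK * 2 ^ (n + 2) * (n / A) ^ α * (1 / (A * I.side) ^ n) := by
            rw [Real.rpow_add hr, Real.rpow_natCast, Real.div_rpow (by positivity) hA0.le,
              Real.mul_rpow (by positivity) hl.le, Real.mul_rpow hA0.le hl.le]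
            have : 0 < I.side ^ α := by positivity
            have : 0 < A ^ α := by positivity
            field_simp
        _ ≤ CK * 2 ^ (n + 2) * (n / A) ^ α * (c₀ * κ) := by gcongr
        _ = CK * 2 ^ (n + 2) * c₀ * (n / A) ^ α * κ := by ring
        _ ≤ ε * κ := by
            have : 0 ≤ κ := le_trans (by positivity) hκ
            gcongr
    constructor
    · refine (hK.norm_sub_le hα hα1 hCK (by rwa [dist_comm]) e1 e2 (by rwa [dist_comm _ x0])).trans ?_
      rw [dist_comm I.center x0]
      exact main _ hk
    · exact (hK.norm_sub_le hα hα1 hCK hd e2 e1 hρ).trans (main _ hk')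

lemma setDist_comm' {s t : Set (Euc n)} : setDist s t = setDist t s := by
  unfold setDist
  rw [Set.image2_swap]
  simp_rw [dist_comm]

lemma le_setDist {I J : Cube n} {r : ℝ}
    (h : ∀ x ∈ I.carrier, ∀ y ∈ J.carrier, r ≤ dist x y) :
    r ≤ setDist I.carrier J.carrier := by
  refine le_csInf ⟨_, Set.mem_image2_of_mem I.center_mem J.center_mem⟩ ?_
  rintro _ ⟨x, hx, y, hy, rfl⟩
  exact h x hx y hy

lemma setDist_le (I J : Cube n) :
    setDist I.carrier J.carrier ≤ dist I.center J.center := by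
  refine csInf_le ⟨0, ?_⟩ (Set.mem_image2_of_mem I.center_mem J.center_mem)
  rintro _ ⟨x, hx, y, hy, rfl⟩
  exact dist_nonneg

/-- The kernel, set to zero on the diagonal, is jointly measurable. -/
lemma IsCZKernel.measurable {α CK : ℝ} (hα : 0 < α) (hα1 : α ≤ 1) (hCK : 0 ≤ CK)
    {K : Euc n → Euc n → ℂ} (hK : IsCZKernel n α CK K) :
    Measurable ({p : Euc n × Euc n | p.1 ≠ p.2}.indicator fun p => K p.1 p.2) := by
  classical
  have ho : IsOpen {p : Euc n × Euc n | p.1 ≠ p.2} := isOpen_ne_fun continuous_fst continuous_snd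
  rw [← Set.piecewise_eq_indicator]
  refine ContinuousOn.measurable_piecewise ?_ continuousOn_const ho.measurableSet
  intro p0 hp0
  refine ContinuousAt.continuousWithinAt ?_
  have hd : 0 < dist p0.1 p0.2 := dist_pos.2 hp0
  have hlim : Filter.Tendsto (fun p : Euc n × Euc n => dist p0 p) (nhds p0) (nhds 0) := by
    have : Continuous fun p : Euc n × Euc n => dist p0 p := by fun_prop
    simpa using this.tendsto p0
  unfold ContinuousAt
  rw [tendsto_iff_norm_sub_tendsto_zero]
  have hlim2 : Filter.Tendsto (fun p : Euc n × Euc n =>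
      CK * 2 ^ (n + 2) * dist p0 p ^ α / dist p0.1 p0.2 ^ ((n : ℝ) + α)) (nhds p0) (nhds 0) := by
    have := ((hlim.rpow_const (Or.inr hα.le)).const_mul (CK * 2 ^ (n + 2))).div_const
      (dist p0.1 p0.2 ^ ((n : ℝ) + α))
    simpa [Real.zero_rpow hα.ne'] using this
  refine squeeze_zero' (Filter.Eventually.of_forall fun p => norm_nonneg _) ?_ hlim2
  filter_upwards [hlim.eventually (gt_mem_nhds (show 0 < dist p0.1 p0.2 / 4 by positivity))]
    with p hp
  exact hK.norm_sub_le hα hα1 hCK hd (by rw [Prod.dist_eq]; exact le_max_left _ _)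
    (by rw [Prod.dist_eq]; exact le_max_right _ _) hp.le

end Geometry

/-! ### Testing the bilinear form on cubes -/

section CubeMeasure

variable {d1 d2 n : ℕ}

/-- The normalized Lebesgue measure on a cube. -/
def cubeMeasure (I : Cube n) : Measure (Euc n) :=
  (volume I.carrier)⁻¹ • volume.restrict I.carrier

lemma Cube.volume_ne_zero (I : Cube n) : volume I.carrier ≠ 0 := by
  rw [I.volume_carrier]
  have := I.side_pos
  simpa using by positivity

lemma Cube.volume_ne_top (I : Cube n) : volume I.carrier ≠ ∞ := by
  rw [I.volume_carrier]
  exact ENNReal.ofReal_ne_top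

lemma Cube.volume_toReal (I : Cube n) : (volume I.carrier).toReal = I.side ^ n := by
  rw [I.volume_carrier, ENNReal.toReal_ofReal (pow_nonneg I.side_pos.le _)]

instance (I : Cube n) : IsProbabilityMeasure (cubeMeasure I) := by
  constructor
  simp [cubeMeasure, ENNReal.inv_mul_cancel I.volume_ne_zero I.volume_ne_top]

lemma ae_mem_cubeMeasure (I : Cube n) : ∀ᵐ x ∂(cubeMeasure I), x ∈ I.carrier :=
  Measure.ae_smul_measure (ae_restrict_mem I.measurableSet) _

lemma cubeMeasure_prod (I1 : Cube d1) (I2 : Cube d2) :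
    (cubeMeasure I1).prod (cubeMeasure I2) =
      ((volume I1.carrier)⁻¹ * (volume I2.carrier)⁻¹) •
        (volume : Measure (Euc d1 × Euc d2)).restrict (I1.carrier ×ˢ I2.carrier) := by
  unfold cubeMeasure
  rw [Measure.volume_eq_prod, ← Measure.prod_restrict, Measure.prod_smul_left]
  have : SFinite ((volume I2.carrier)⁻¹ • (volume : Measure (Euc d2)).restrict I2.carrier) :=
    inferInstance
  rw [Measure.prod_smul_right, smul_smul]

lemma ae_mem_cubeMeasure_prod (I1 : Cube d1) (I2 : Cube d2) :
    ∀ᵐ x ∂((cubeMeasure I1).prod (cubeMeasure I2)), x ∈ I1.carrier ×ˢ I2.carrier := by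
  rw [cubeMeasure_prod]
  exact Measure.ae_smul_measure (ae_restrict_mem (I1.measurableSet.prod I2.measurableSet)) _

lemma integral_rect (I1 : Cube d1) (I2 : Cube d2) {E : Type*} [NormedAddCommGroup E]
    [NormedSpace ℝ E] (f : Euc d1 × Euc d2 → E) :
    ∫ x in I1.carrier ×ˢ I2.carrier, f x =
      (I1.side ^ d1 * I2.side ^ d2) • ∫ x, f x ∂((cubeMeasure I1).prod (cubeMeasure I2)) := by
  rw [cubeMeasure_prod, integral_smul_measure, smul_smul]
  have h1 := I1.side_pos
  have h2 := I2.side_pos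
  rw [ENNReal.toReal_mul, ENNReal.toReal_inv, ENNReal.toReal_inv, I1.volume_toReal,
    I2.volume_toReal]
  have : I1.side ^ d1 * I2.side ^ d2 * ((I1.side ^ d1)⁻¹ * (I2.side ^ d2)⁻¹) = 1 := by
    field_simp
  rw [this, one_smul]

lemma integrable_cubeMeasure_prod (hd1 : 1 ≤ d1) (hd2 : 1 ≤ d2) {b : Euc d1 × Euc d2 → ℂ}
    (hb : LocallyIntegrable b volume) (I1 : Cube d1) (I2 : Cube d2) :
    Integrable b ((cubeMeasure I1).prod (cubeMeasure I2)) := by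
  rw [cubeMeasure_prod]
  refine Integrable.smul_measure ?_ (ENNReal.mul_ne_top (ENNReal.inv_ne_top.2 I1.volume_ne_zero)
    (ENNReal.inv_ne_top.2 I2.volume_ne_zero))
  have hc := (isCompact_closedBall I1.center (d1 * I1.side / 2)).prod
    (isCompact_closedBall I2.center (d2 * I2.side / 2))
  refine (hb.integrableOn_isCompact hc).mono_set (Set.prod_mono ?_ ?_)
  · exact fun x hx => I1.dist_center_le hd1 hx
  · exact fun x hx => I2.dist_center_le hd2 hx

/-- The bi-parameter oscillation is dominated by the mean double difference over `R × R`. -/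
lemma osc11_le {b : Euc d1 × Euc d2 → ℂ} (hb : Measurable b) {I1 : Cube d1} {I2 : Cube d2}
    (hi : Integrable b ((cubeMeasure I1).prod (cubeMeasure I2))) :
    ENNReal.ofReal (osc11 b I1 I2) ≤ ENNReal.ofReal (I1.side ^ d1 * I2.side ^ d2) *
      ddMean b (cubeMeasure I1) (cubeMeasure I1) (cubeMeasure I2) (cubeMeasure I2) := by
  have h1 := I1.side_pos
  have h2 := I2.side_pos
  set μ1 := cubeMeasure I1 with hμ1
  set μ2 := cubeMeasure I2 with hμ2
  have hdd := integrable_dd hi hi hi hi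
  have hG : ∀ᵐ x ∂(μ1.prod μ2), b x - avgFst b I1 x.2 - avgSnd b I2 x.1 + avgRect b I1 I2 =
      ∫ y, dd b x.1 y.1 x.2 y.2 ∂(μ1.prod μ2) := by
    have q1 : ∀ᵐ x ∂(μ1.prod μ2), Integrable (fun y2 => b (x.1, y2)) μ2 :=
      Measure.quasiMeasurePreserving_fst.ae hi.prod_right_ae
    have q2 : ∀ᵐ x ∂(μ1.prod μ2), Integrable (fun y1 => b (y1, x.2)) μ1 :=
      Measure.quasiMeasurePreserving_snd.ae hi.prod_left_ae
    filter_upwards [q1, q2] with x hx1 hx2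
    have e1 : avgFst b I1 x.2 = ∫ y1, b (y1, x.2) ∂μ1 := by
      rw [avgFst, hμ1, cubeMeasure, integral_smul_measure, ENNReal.toReal_inv]
    have e2 : avgSnd b I2 x.1 = ∫ y2, b (x.1, y2) ∂μ2 := by
      rw [avgSnd, hμ2, cubeMeasure, integral_smul_measure, ENNReal.toReal_inv]
    have e3 : avgRect b I1 I2 = ∫ y, b y ∂(μ1.prod μ2) := by
      rw [avgRect, integral_rect, smul_smul, Measure.volume_eq_prod, Measure.prod_prod,
        ENNReal.toReal_mul, I1.volume_toReal, I2.volume_toReal, inv_mul_cancel₀ (by positivity),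
        one_smul]
    have i1 : Integrable (fun y : Euc d1 × Euc d2 => b (x.1, y.2)) (μ1.prod μ2) := hx1.comp_snd μ1
    have i2 : Integrable (fun y : Euc d1 × Euc d2 => b (y.1, x.2)) (μ1.prod μ2) := hx2.comp_fst μ2
    have f1 : ∫ y : Euc d1 × Euc d2, b (x.1, y.2) ∂(μ1.prod μ2) = ∫ y2, b (x.1, y2) ∂μ2 := by
      rw [integral_fun_snd (fun y2 => b (x.1, y2))]; simp
    have f2 : ∫ y : Euc d1 × Euc d2, b (y.1, x.2) ∂(μ1.prod μ2) = ∫ y1, b (y1, x.2) ∂μ1 := by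
      rw [integral_fun_fst (fun y1 => b (y1, x.2))]; simp
    have j0 : Integrable (fun y : Euc d1 × Euc d2 => b (x.1, x.2)) (μ1.prod μ2) :=
      integrable_const _
    have i3 : Integrable (fun y : Euc d1 × Euc d2 => b (x.1, x.2) - b (x.1, y.2)) (μ1.prod μ2) :=
      j0.sub i1
    have i4 : Integrable (fun y : Euc d1 × Euc d2 => b (x.1, x.2) - b (x.1, y.2) - b (y.1, x.2))
      (μ1.prod μ2) := i3.sub i2
    have hi' : Integrable (fun y : Euc d1 × Euc d2 => b (y.1, y.2)) (μ1.prod μ2) := hi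
    have e4 : (fun y : Euc d1 × Euc d2 => dd b x.1 y.1 x.2 y.2) = fun y : Euc d1 × Euc d2 =>
        b (x.1, x.2) - b (x.1, y.2) - b (y.1, x.2) + b (y.1, y.2) := by
      funext y
      unfold dd
      ring
    rw [e4, integral_add i4 hi', integral_sub i3 i2, integral_sub j0 i1, f1, f2, e1, e2, e3]
    simp
    ring
  have key : ENNReal.ofReal (∫ x, ‖b x - avgFst b I1 x.2 - avgSnd b I2 x.1 + avgRect b I1 I2‖
      ∂(μ1.prod μ2)) ≤ ddMean b μ1 μ1 μ2 μ2 := by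
    rw [integral_congr_ae (g := fun x => ‖∫ y, dd b x.1 y.1 x.2 y.2 ∂(μ1.prod μ2)‖)
      (hG.mono fun x hx => by simp only [hx]),
      ofReal_integral_norm_eq_lintegral_enorm hdd.integral_prod_left, ddMean_eq hb]
    exact lintegral_mono fun x => enorm_integral_le_lintegral_enorm _
  rw [osc11, integral_rect, smul_eq_mul, ENNReal.ofReal_mul (by positivity)]
  gcongr

/-- Testing the form on one admissible configuration, with `f1` the indicator of `B1 × B2` and
`f2` a function bounded by one on `A1 × A2`: the averaged double difference is controlled by the
testing bound `E`, up to a small multiple of the mean double difference that comes from the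
variation of the kernels around the constants `k1`, `k2`. -/
lemma ddAvgNorm_le_of_test {b : Euc d1 × Euc d2 → ℂ} (hb : Measurable b)
    (hi : ∀ (I1 : Cube d1) (I2 : Cube d2), Integrable b ((cubeMeasure I1).prod (cubeMeasure I2)))
    {K1 : Euc d1 → Euc d1 → ℂ} {K2 : Euc d2 → Euc d2 → ℂ}
    (hK1 : Measurable ({p : Euc d1 × Euc d1 | p.1 ≠ p.2}.indicator fun p => K1 p.1 p.2))
    (hK2 : Measurable ({p : Euc d2 × Euc d2 | p.1 ≠ p.2}.indicator fun p => K2 p.1 p.2))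
    {A1 B1 : Cube d1} {A2 B2 : Cube d2} {v1 v2 D1 D2 E : ℝ} {k1 k2 : ℂ}
    (hv1 : 0 < v1) (hv2 : 0 < v2) (hD1 : 0 < D1) (hD2 : 0 < D2) (hE0 : 0 ≤ E)
    (hA1 : A1.side ^ d1 = v1) (hB1 : B1.side ^ d1 = v1)
    (hA2 : A2.side ^ d2 = v2) (hB2 : B2.side ^ d2 = v2)
    (hne1 : ∀ x ∈ A1.carrier, ∀ y ∈ B1.carrier, x ≠ y)
    (hne2 : ∀ x ∈ A2.carrier, ∀ y ∈ B2.carrier, x ≠ y)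
    (hk1 : 1 ≤ D1 * v1 * ‖k1‖) (hk2 : 1 ≤ D2 * v2 * ‖k2‖)
    (hc1 : ∀ x ∈ A1.carrier, ∀ y ∈ B1.carrier, ‖K1 x y - k1‖ ≤ 1 / 40 * ‖k1‖)
    (hc2 : ∀ x ∈ A2.carrier, ∀ y ∈ B2.carrier, ‖K2 x y - k2‖ ≤ 1 / 40 * ‖k2‖)
    (hE : ∀ f1 f2 : Euc d1 × Euc d2 → ℂ, Measurable f1 → Measurable f2 →
      (∀ x, ‖f1 x‖ ≤ (B1.carrier ×ˢ B2.carrier).indicator (fun _ => (1 : ℝ)) x) →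
      (∀ x, ‖f2 x‖ ≤ (A1.carrier ×ˢ A2.carrier).indicator (fun _ => (1 : ℝ)) x) →
      ‖biCommForm b K1 K2 f1 f2‖ ≤ E) :
    ddAvgNorm b (cubeMeasure A1) (cubeMeasure B1) (cubeMeasure A2) (cubeMeasure B2) ≤
      ENNReal.ofReal (D1 * D2 * E / (v1 * v2)) + ENNReal.ofReal (1 / 18) *
        ddMean b (cubeMeasure A1) (cubeMeasure B1) (cubeMeasure A2) (cubeMeasure B2) := by
  set μ := (cubeMeasure A1).prod (cubeMeasure A2) with hμ
  set ν := (cubeMeasure B1).prod (cubeMeasure B2) with hν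
  set A := A1.carrier ×ˢ A2.carrier with hA
  set B := B1.carrier ×ˢ B2.carrier with hB
  have hAm : MeasurableSet A := A1.measurableSet.prod A2.measurableSet
  have hBm : MeasurableSet B := B1.measurableSet.prod B2.measurableSet
  have hae : ∀ᵐ p ∂(μ.prod ν), p.1 ∈ A ∧ p.2 ∈ B :=
    (Measure.quasiMeasurePreserving_fst.ae (ae_mem_cubeMeasure_prod A1 A2)).and
      (Measure.quasiMeasurePreserving_snd.ae (ae_mem_cubeMeasure_prod B1 B2))
  let F : (Euc d1 × Euc d2) × (Euc d1 × Euc d2) → ℂ := fun p => dd b p.1.1 p.2.1 p.1.2 p.2.2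
  let κ : (Euc d1 × Euc d2) × (Euc d1 × Euc d2) → ℂ := fun p => K1 p.1.1 p.2.1 * K2 p.1.2 p.2.2
  have hFm : Measurable F := by simp only [F]; unfold dd; fun_prop
  have hFi : Integrable F (μ.prod ν) := integrable_dd (hi _ _) (hi _ _) (hi _ _) (hi _ _)
  have hκ : AEStronglyMeasurable κ (μ.prod ν) := by
    have m1 := hK1.comp (show Measurable fun p : (Euc d1 × Euc d2) × (Euc d1 × Euc d2) => (p.1.1, p.2.1) by fun_prop)
    have m2 := hK2.comp (show Measurable fun p : (Euc d1 × Euc d2) × (Euc d1 × Euc d2) => (p.1.2, p.2.2) by fun_prop)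
    refine ((m1.mul m2).aestronglyMeasurable).congr ?_
    filter_upwards [hae] with p hp
    have n1 : (p.1.1, p.2.1) ∈ {p : Euc d1 × Euc d1 | p.1 ≠ p.2} := hne1 _ hp.1.1 _ hp.2.1
    have n2 : (p.1.2, p.2.2) ∈ {p : Euc d2 × Euc d2 | p.1 ≠ p.2} := hne2 _ hp.1.2 _ hp.2.2
    simp only [Function.comp_apply, Pi.mul_apply, κ, Set.indicator_of_mem n1,
      Set.indicator_of_mem n2]
  have hk : ∀ᵐ p ∂(μ.prod ν), ‖κ p - k1 * k2‖ ≤ 1 / 18 * ‖k1 * k2‖ := by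
    filter_upwards [hae] with p hp
    have a1 := hc1 _ hp.1.1 _ hp.2.1
    have a2 := hc2 _ hp.1.2 _ hp.2.2
    have e : κ p - k1 * k2 = (K1 p.1.1 p.2.1 - k1) * (K2 p.1.2 p.2.2 - k2) +
        (K1 p.1.1 p.2.1 - k1) * k2 + k1 * (K2 p.1.2 p.2.2 - k2) := by simp only [κ]; ring
    rw [e]
    refine (norm_add₃_le).trans ?_
    simp only [norm_mul]
    have b1 := mul_le_mul a1 a2 (norm_nonneg _) (by positivity)
    have b2 := mul_le_mul_of_nonneg_right a1 (norm_nonneg k2)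
    have b3 := mul_le_mul_of_nonneg_left a2 (norm_nonneg k1)
    nlinarith [mul_nonneg (norm_nonneg k1) (norm_nonneg k2)]
  obtain ⟨g, hgm, hg1, hg⟩ := exists_test_function hFm hFi hκ hk
  have hform : biCommForm b K1 K2 (B.indicator fun _ => 1) (A.indicator g) =
      (v1 * v2 : ℝ) • (v1 * v2 : ℝ) • ∫ x, ∫ y, F (x, y) * κ (x, y) * g x ∂ν ∂μ := by
    have e1 : ∀ x : Euc d1 × Euc d2, ∫ y : Euc d1 × Euc d2, biB b x y * K1 x.1 y.1 * K2 x.2 y.2 *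
        (B.indicator (fun _ => (1 : ℂ)) y) * (A.indicator g x) =
        A.indicator (fun x => (v1 * v2 : ℝ) • ∫ y, F (x, y) * κ (x, y) * g x ∂ν) x := by
      intro x
      by_cases hx : x ∈ A
      · rw [Set.indicator_of_mem hx, Set.indicator_of_mem hx, ← hB1, ← hB2, hν,
          ← integral_rect B1 B2, ← integral_indicator hBm]
        congr 1; ext y
        by_cases hy : y ∈ B
        · simp only [Set.indicator_of_mem hy, F, κ, biB, dd]
          ring
        · simp [Set.indicator_of_notMem hy]
      · simp [Set.indicator_of_notMem hx]
    unfold biCommForm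
    simp_rw [e1]
    rw [integral_indicator hAm, integral_rect A1 A2, hA1, hA2, integral_smul]
  have htest := hE (B.indicator fun _ => 1) (A.indicator g)
    (measurable_const.indicator hBm) (hgm.indicator hAm)
    (fun x => by
      by_cases hx : x ∈ B
      · simp [Set.indicator_of_mem hx]
      · simp [Set.indicator_of_notMem hx])
    (fun x => by
      by_cases hx : x ∈ A
      · simpa [Set.indicator_of_mem hx] using hg1 x
      · simp [Set.indicator_of_notMem hx])
  rw [hform, norm_smul, norm_smul, Real.norm_of_nonneg (by positivity)] at htest
  set T := ∫ x, ∫ y, F (x, y) * κ (x, y) * g x ∂ν ∂μ with hT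
  rw [ddAvgNorm_eq hb (hi _ _) (hi _ _) (hi _ _) (hi _ _), ddMean_eq hb]
  change ‖k1 * k2‖ₑ * ∫⁻ x, ‖∫ y, dd b x.1 y.1 x.2 y.2 ∂ν‖ₑ ∂μ ≤ _ + _ *
    ∫⁻ x, ∫⁻ y, ‖dd b x.1 y.1 x.2 y.2‖ₑ ∂ν ∂μ at hg
  set N := ∫⁻ x, ‖∫ y, dd b x.1 y.1 x.2 y.2 ∂ν‖ₑ ∂μ
  set Y := ∫⁻ x, ∫⁻ y, ‖dd b x.1 y.1 x.2 y.2‖ₑ ∂ν ∂μ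
  have hk0 : 0 < ‖k1 * k2‖ := by
    rw [norm_mul]
    have p1 : 0 < ‖k1‖ := by
      by_contra h
      have : ‖k1‖ = 0 := le_antisymm (not_lt.1 h) (norm_nonneg _)
      rw [this] at hk1; linarith
    have p2 : 0 < ‖k2‖ := by
      by_contra h
      have : ‖k2‖ = 0 := le_antisymm (not_lt.1 h) (norm_nonneg _)
      rw [this] at hk2; linarith
    positivity
  have hkk : 1 ≤ D1 * D2 * (v1 * v2) * ‖k1 * k2‖ := by
    rw [norm_mul]
    calc (1 : ℝ) = 1 * 1 := by norm_num
      _ ≤ (D1 * v1 * ‖k1‖) * (D2 * v2 * ‖k2‖) := mul_le_mul hk1 hk2 zero_le_one (by positivity)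
      _ = _ := by ring
  have hTle : ‖T‖ ≤ ‖k1 * k2‖ * (D1 * D2 * E / (v1 * v2)) := by
    have t1 : ‖T‖ ≤ E / (v1 * v2) ^ 2 := by
      rw [le_div_iff₀ (by positivity)]
      linarith
    calc ‖T‖ ≤ 1 * (E / (v1 * v2) ^ 2) := by rwa [one_mul]
      _ ≤ (D1 * D2 * (v1 * v2) * ‖k1 * k2‖) * (E / (v1 * v2) ^ 2) := by gcongr
      _ = _ := by field_simp
  have hTe : ‖T‖ₑ ≤ ‖k1 * k2‖ₑ * ENNReal.ofReal (D1 * D2 * E / (v1 * v2)) := by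
    rw [← ofReal_norm, ← ofReal_norm, ← ENNReal.ofReal_mul hk0.le]
    exact ENNReal.ofReal_le_ofReal hTle
  have hfin : ‖k1 * k2‖ₑ * N ≤ ‖k1 * k2‖ₑ *
      (ENNReal.ofReal (D1 * D2 * E / (v1 * v2)) + ENNReal.ofReal (1 / 18) * Y) := by
    calc _ ≤ _ := hg
      _ ≤ ‖k1 * k2‖ₑ * ENNReal.ofReal (D1 * D2 * E / (v1 * v2)) +
          ENNReal.ofReal (1 / 18) * ‖k1 * k2‖ₑ * Y := by gcongr
      _ = _ := by ring
  refine (ENNReal.mul_le_mul_iff_right ?_ ?_).1 hfin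
  · rw [← ofReal_norm]
    exact (ENNReal.ofReal_pos.2 hk0).ne'
  · exact enorm_ne_top

lemma ae_eq_biB {b b' : Euc d1 × Euc d2 → ℂ} (h : b =ᵐ[volume] b') :
    ∀ᵐ x : Euc d1 × Euc d2, ∀ᵐ y : Euc d1 × Euc d2, biB b x y = biB b' x y := by
  have q1 : ∀ᵐ p ∂((volume : Measure (Euc d1 × Euc d2)).prod
      (volume : Measure (Euc d1 × Euc d2))), b (p.1.1, p.2.2) = b' (p.1.1, p.2.2) :=
    (QuasiMeasurePreserving.prodMap Measure.quasiMeasurePreserving_fst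
      Measure.quasiMeasurePreserving_snd).ae h
  have q2 : ∀ᵐ p ∂((volume : Measure (Euc d1 × Euc d2)).prod
      (volume : Measure (Euc d1 × Euc d2))), b (p.2.1, p.1.2) = b' (p.2.1, p.1.2) :=
    Measure.measurePreserving_swap.quasiMeasurePreserving.ae q1
  filter_upwards [h, Measure.ae_ae_of_ae_prod q1, Measure.ae_ae_of_ae_prod q2] with x h1 h2 h3
  filter_upwards [h, h2, h3] with y g1 g2 g3
  unfold biB
  rw [g2, g3]
  congr 3

/-- The form does not change when the symbol is modified on a null set. -/
lemma biCommForm_congr {b b' : Euc d1 × Euc d2 → ℂ} (h : b =ᵐ[volume] b')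
    (K1 : Euc d1 → Euc d1 → ℂ) (K2 : Euc d2 → Euc d2 → ℂ) (f1 f2 : Euc d1 × Euc d2 → ℂ) :
    biCommForm b K1 K2 f1 f2 = biCommForm b' K1 K2 f1 f2 := by
  unfold biCommForm
  refine integral_congr_ae ?_
  filter_upwards [ae_eq_biB h] with x hx
  refine integral_congr_ae ?_
  filter_upwards [hx] with y hy
  rw [hy]

lemma osc11_congr {b b' : Euc d1 × Euc d2 → ℂ} (h : b =ᵐ[volume] b') (I1 : Cube d1)
    (I2 : Cube d2) : osc11 b I1 I2 = osc11 b' I1 I2 := by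
  have e3 : avgRect b I1 I2 = avgRect b' I1 I2 := by
    unfold avgRect
    rw [integral_congr_ae (ae_restrict_of_ae h)]
  have hR : ∀ᵐ x1 : Euc d1, ∀ᵐ x2 : Euc d2, b (x1, x2) = b' (x1, x2) :=
    Measure.ae_ae_of_ae_prod h
  have hL : ∀ᵐ x2 : Euc d2, ∀ᵐ x1 : Euc d1, b (x1, x2) = b' (x1, x2) :=
    Measure.ae_ae_of_ae_prod (p := fun z : Euc d2 × Euc d1 => b (z.2, z.1) = b' (z.2, z.1))
      (Measure.measurePreserving_swap.quasiMeasurePreserving.ae h)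
  have q1 : ∀ᵐ x : Euc d1 × Euc d2, ∀ᵐ x2 : Euc d2, b (x.1, x2) = b' (x.1, x2) :=
    Measure.quasiMeasurePreserving_fst.ae hR
  have q2 : ∀ᵐ x : Euc d1 × Euc d2, ∀ᵐ x1 : Euc d1, b (x1, x.2) = b' (x1, x.2) :=
    Measure.quasiMeasurePreserving_snd.ae hL
  unfold osc11
  refine integral_congr_ae (ae_restrict_of_ae ?_)
  filter_upwards [h, q1, q2] with x hx h1 h2
  have e1 : avgFst b I1 x.2 = avgFst b' I1 x.2 := by
    unfold avgFst
    rw [integral_congr_ae (ae_restrict_of_ae h2)]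
  have e2 : avgSnd b I2 x.1 = avgSnd b' I2 x.1 := by
    unfold avgSnd
    rw [integral_congr_ae (ae_restrict_of_ae h1)]
  rw [hx, e1, e2, e3]

end CubeMeasure

/-! ### Absorption and conclusion -/

/-- The absorption step: a finite `Y` dominated by nine copies of `a + Y / 18` is at most `18 a`. -/
lemma absorb_le {Y a N1 N2 N3 N4 : ℝ≥0∞} (hY : Y ≠ ∞) (ha : a ≠ ∞)
    (h1 : N1 ≤ a + ENNReal.ofReal (1 / 18) * Y) (h2 : N2 ≤ a + ENNReal.ofReal (1 / 18) * Y)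
    (h3 : N3 ≤ a + ENNReal.ofReal (1 / 18) * Y) (h4 : N4 ≤ a + ENNReal.ofReal (1 / 18) * Y)
    (h : Y ≤ 2 * (2 * N1 + N2) + (2 * N3 + N4)) : Y ≤ 18 * a := by
  have hle : Y ≤ 9 * (a + ENNReal.ofReal (1 / 18) * Y) := by
    calc Y ≤ 2 * (2 * N1 + N2) + (2 * N3 + N4) := h
      _ ≤ 2 * (2 * (a + ENNReal.ofReal (1 / 18) * Y) + (a + ENNReal.ofReal (1 / 18) * Y)) +
          (2 * (a + ENNReal.ofReal (1 / 18) * Y) + (a + ENNReal.ofReal (1 / 18) * Y)) := by gcongr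
      _ = _ := by ring
  have hfin : 9 * (a + ENNReal.ofReal (1 / 18) * Y) ≠ ∞ := by finiteness
  have hr := ENNReal.toReal_mono hfin hle
  rw [ENNReal.toReal_mul, ENNReal.toReal_add ha (by finiteness), ENNReal.toReal_mul,
    ENNReal.toReal_ofReal (by norm_num), ENNReal.toReal_ofNat] at hr
  rw [← ENNReal.toReal_le_toReal hY (by finiteness), ENNReal.toReal_mul, ENNReal.toReal_ofNat]
  linarith

theorem statement12 (d1 d2 : ℕ) (hd1 : 1 ≤ d1) (hd2 : 1 ≤ d2)
    (α1 α2 : ℝ) (hα1 : 0 < α1) (hα1' : α1 ≤ 1) (hα2 : 0 < α2) (hα2' : α2 ≤ 1)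
    (CK1 CK2 : ℝ) (hCK1 : 0 ≤ CK1) (hCK2 : 0 ≤ CK2) (c₀ : ℝ) (hc₀ : 0 < c₀)
    (p1 p2 q1 q2 : ℝ) (hp1 : 1 < p1) (hp2 : 1 < p2) (hq1 : 1 < q1) (hq2 : 1 < q2) :
    ∃ c1 c2 C : ℝ, 0 < c1 ∧ c1 ≤ c2 ∧ 0 < C ∧
      ∀ (K1 : Euc d1 → Euc d1 → ℂ) (K2 : Euc d2 → Euc d2 → ℂ),
        IsCZKernel d1 α1 CK1 K1 → SymNonDeg d1 c₀ K1 →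
        IsCZKernel d2 α2 CK2 K2 → SymNonDeg d2 c₀ K2 →
      ∀ b : Euc d1 × Euc d2 → ℂ, MeasureTheory.LocallyIntegrable b volume →
      ∀ C₀ : ℝ, 0 ≤ C₀ →
      (∀ (J1 L1 : Cube d1) (J2 L2 : Cube d2), IsAdmissible c1 c2 J1 L1 J2 L2 →
        ∀ f1 f2 : Euc d1 × Euc d2 → ℂ, Measurable f1 → Measurable f2 →
          (∀ x, ‖f1 x‖ ≤ (J1.carrier ×ˢ J2.carrier).indicator (fun _ => (1 : ℝ)) x) →
          (∀ x, ‖f2 x‖ ≤ (L1.carrier ×ˢ L2.carrier).indicator (fun _ => (1 : ℝ)) x) →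
          ‖biCommForm b K1 K2 f1 f2‖ ≤
            C₀ * (volume J1.carrier).toReal ^ (1 + 1 / p1 - 1 / q1) *
              (volume J2.carrier).toReal ^ (1 + 1 / p2 - 1 / q2)) →
      ∀ (I1 : Cube d1) (I2 : Cube d2),
        osc11 b I1 I2 ≤ C * C₀ * (volume I1.carrier).toReal ^ (1 + 1 / p1 - 1 / q1) *
          (volume I2.carrier).toReal ^ (1 + 1 / p2 - 1 / q2) := by
  obtain ⟨D1, c21, hD1, hc21, hcomp1⟩ :=
    exists_companion hd1 hα1 hα1' hCK1 hc₀ (show (0 : ℝ) < 1 / 40 by norm_num)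
  obtain ⟨D2, c22, hD2, hc22, hcomp2⟩ :=
    exists_companion hd2 hα2 hα2' hCK2 hc₀ (show (0 : ℝ) < 1 / 40 by norm_num)
  refine ⟨1, max c21 c22, 72 * (D1 * D2), one_pos, le_max_of_le_left hc21, by positivity, ?_⟩
  intro K1 K2 hK1 hN1 hK2 hN2 b₀ hb₀ C₀ hC₀ htest₀ I1 I2
  -- Replace the symbol by a Borel measurable representative.
  obtain ⟨b, hb, hbb⟩ : ∃ b : Euc d1 × Euc d2 → ℂ, Measurable b ∧ b₀ =ᵐ[volume] b :=
    ⟨hb₀.aestronglyMeasurable.mk b₀, hb₀.aestronglyMeasurable.stronglyMeasurable_mk.measurable,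
      hb₀.aestronglyMeasurable.ae_eq_mk⟩
  rw [osc11_congr hbb]
  simp_rw [biCommForm_congr hbb] at htest₀
  have hi : ∀ (I1 : Cube d1) (I2 : Cube d2),
      Integrable b ((cubeMeasure I1).prod (cubeMeasure I2)) := by
    intro I1 I2
    refine (integrable_cubeMeasure_prod hd1 hd2 hb₀ I1 I2).congr ?_
    rw [cubeMeasure_prod]
    exact Measure.ae_smul_measure (ae_restrict_of_ae hbb) _
  obtain ⟨J1, hs1, hsep1, hdc1, k1, k1', hk1, hk1', hK1c⟩ := hcomp1 K1 hK1 hN1 I1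
  obtain ⟨J2, hs2, hsep2, hdc2, k2, k2', hk2, hk2', hK2c⟩ := hcomp2 K2 hK2 hN2 I2
  have hp1 := I1.side_pos
  have hp2 := I2.side_pos
  have hv1 : 0 < I1.side ^ d1 := by positivity
  have hv2 : 0 < I2.side ^ d2 := by positivity
  rw [I1.volume_toReal, I2.volume_toReal]
  set v1 := I1.side ^ d1 with hv1d
  set v2 := I2.side ^ d2 with hv2d
  set E := C₀ * v1 ^ (1 + 1 / p1 - 1 / q1) * v2 ^ (1 + 1 / p2 - 1 / q2) with hEd
  have hE0 : 0 ≤ E := by positivity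
  have hJ1 : J1.side ^ d1 = v1 := by rw [hs1]
  have hJ2 : J2.side ^ d2 = v2 := by rw [hs2]
  have near1 : setDist I1.carrier J1.carrier ≤ max c21 c22 * I1.side :=
    (setDist_le I1 J1).trans (hdc1.trans (by gcongr; exact le_max_left _ _))
  have near2 : setDist I2.carrier J2.carrier ≤ max c21 c22 * I2.side :=
    (setDist_le I2 J2).trans (hdc2.trans (by gcongr; exact le_max_right _ _))
  have far1 := le_setDist hsep1
  have far2 := le_setDist hsep2
  have ne1 : ∀ x ∈ I1.carrier, ∀ y ∈ J1.carrier, x ≠ y := fun x hx y hy =>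
    dist_pos.1 (hp1.trans_le (hsep1 x hx y hy))
  have ne2 : ∀ x ∈ I2.carrier, ∀ y ∈ J2.carrier, x ≠ y := fun x hx y hy =>
    dist_pos.1 (hp2.trans_le (hsep2 x hx y hy))
  -- `f1` lives on `B1 × B2` and `f2` on `A1 × A2`; each `(A, B)` is `(I, J)` or `(J, I)`.
  have test : ∀ (A1 B1 : Cube d1) (A2 B2 : Cube d2), A1.side = I1.side → B1.side = I1.side →
      A2.side = I2.side → B2.side = I2.side →
      setDist B1.carrier A1.carrier = setDist I1.carrier J1.carrier →
      setDist B2.carrier A2.carrier = setDist I2.carrier J2.carrier →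
      ∀ f1 f2 : Euc d1 × Euc d2 → ℂ, Measurable f1 → Measurable f2 →
      (∀ x, ‖f1 x‖ ≤ (B1.carrier ×ˢ B2.carrier).indicator (fun _ => (1 : ℝ)) x) →
      (∀ x, ‖f2 x‖ ≤ (A1.carrier ×ˢ A2.carrier).indicator (fun _ => (1 : ℝ)) x) →
      ‖biCommForm b K1 K2 f1 f2‖ ≤ E := by
    intro A1 B1 A2 B2 a1 b1 a2 b2 e1 e2 f1 f2 m1 m2 g1 g2
    have hadm : IsAdmissible 1 (max c21 c22) B1 A1 B2 A2 := by
      refine ⟨b1.trans a1.symm, b2.trans a2.symm, ?_⟩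
      rw [e1, e2, b1, b2, one_mul, one_mul]
      exact ⟨far1, near1, far2, near2⟩
    have := htest₀ B1 A1 B2 A2 hadm f1 f2 m1 m2 g1 g2
    rwa [B1.volume_toReal, B2.volume_toReal, b1, b2] at this
  have hm1 := hK1.measurable hα1 hα1' hCK1
  have hm2 := hK2.measurable hα2 hα2' hCK2
  set μ1 := cubeMeasure I1
  set ν1 := cubeMeasure J1
  set μ2 := cubeMeasure I2
  set ν2 := cubeMeasure J2
  have t1 := ddAvgNorm_le_of_test hb hi hm1 hm2 hv1 hv2 hD1 hD2 hE0 rfl hJ1 rfl hJ2 ne1 ne2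
    hk1 hk2 (fun x hx y hy => (hK1c x hx y hy).1) (fun x hx y hy => (hK2c x hx y hy).1)
    (test I1 J1 I2 J2 rfl hs1 rfl hs2 setDist_comm' setDist_comm')
  have t2 := ddAvgNorm_le_of_test hb hi hm1 hm2 hv1 hv2 hD1 hD2 hE0 rfl hJ1 hJ2 rfl ne1
    (fun x hx y hy => (ne2 y hy x hx).symm)
    hk1 hk2' (fun x hx y hy => (hK1c x hx y hy).1) (fun x hx y hy => (hK2c y hy x hx).2)
    (test I1 J1 J2 I2 rfl hs1 hs2 rfl setDist_comm' rfl)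
  have t3 := ddAvgNorm_le_of_test hb hi hm1 hm2 hv1 hv2 hD1 hD2 hE0 hJ1 rfl rfl hJ2
    (fun x hx y hy => (ne1 y hy x hx).symm) ne2
    hk1' hk2 (fun x hx y hy => (hK1c y hy x hx).2) (fun x hx y hy => (hK2c x hx y hy).1)
    (test J1 I1 I2 J2 hs1 rfl rfl hs2 rfl setDist_comm')
  have t4 := ddAvgNorm_le_of_test hb hi hm1 hm2 hv1 hv2 hD1 hD2 hE0 hJ1 rfl hJ2 rfl
    (fun x hx y hy => (ne1 y hy x hx).symm) (fun x hx y hy => (ne2 y hy x hx).symm)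
    hk1' hk2' (fun x hx y hy => (hK1c y hy x hx).2) (fun x hx y hy => (hK2c y hy x hx).2)
    (test J1 I1 J2 I2 hs1 rfl hs2 rfl rfl rfl)
  -- The mean double difference is invariant under exchanging the two measures in a parameter.
  rw [ddMean_swap_snd hb] at t2
  rw [ddMean_swap_fst hb] at t3
  rw [ddMean_swap_snd hb, ddMean_swap_fst hb] at t4
  have hYfin : ddMean b μ1 ν1 μ2 ν2 ≠ ∞ := by
    have hm : Measurable fun p : (Euc d1 × Euc d2) × (Euc d1 × Euc d2) =>
        ‖dd b p.1.1 p.2.1 p.1.2 p.2.2‖ₑ := by unfold dd; fun_prop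
    have hfi := (integrable_dd (hi I1 I2) (hi I1 J2) (hi J1 I2) (hi J1 J2)).hasFiniteIntegral
    rw [hasFiniteIntegral_iff_enorm, lintegral_prod _ hm.aemeasurable] at hfi
    rw [ddMean_eq hb]
    exact hfi.ne
  have hY := absorb_le hYfin ENNReal.ofReal_ne_top t1 t2 t3 t4
    (ddMean_le hb (hi I1 I2) (hi I1 J2) (hi J1 I2) (hi J1 J2))
  have hfinal : ENNReal.ofReal (osc11 b I1 I2) ≤ ENNReal.ofReal (72 * (D1 * D2) * E) := by
    calc ENNReal.ofReal (osc11 b I1 I2)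
        ≤ ENNReal.ofReal (v1 * v2) * ddMean b μ1 μ1 μ2 μ2 := osc11_le hb (hi I1 I2)
      _ ≤ ENNReal.ofReal (v1 * v2) *
          (4 * (18 * ENNReal.ofReal (D1 * D2 * E / (v1 * v2)))) := by
        gcongr
        exact (ddMean_self_le hb μ1 ν1 μ2 ν2).trans (by gcongr)
      _ = ENNReal.ofReal (72 * (D1 * D2) * E) := by
        rw [← ENNReal.ofReal_ofNat 4, ← ENNReal.ofReal_ofNat 18,
          ← ENNReal.ofReal_mul (by norm_num), ← ENNReal.ofReal_mul (by norm_num),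
          ← ENNReal.ofReal_mul (by positivity)]
        congr 1
        field_simp
        ring
  refine ((ENNReal.ofReal_le_ofReal_iff (by positivity)).1 hfinal).trans (le_of_eq ?_)
  rw [hEd]
  ring
end
end

section
/- Let d1, d2 ≥ 1, let p_i < q_i ∈ (1,∞) and β_i = d_i(1/p_i − 1/q_i) for i = 1,2, and let K_i be standard Calderón–Zygmund kernels on ℝ^{d_i} with constants C_{K_i}. There is a constant C, depending only on d1, d2, p1, p2, q1, q2, C_{K1}, C_{K2}, such that for every measurable b : ℝ^{d1}×ℝ^{d2} → ℂ and all measurable f, g : ℝ^{d1}×ℝ^{d2} → ℂ: ∬_{ℝ^{d1+d2}×ℝ^{d1+d2}} |B(x,y)|·|K1(x1,y1)|·|K2(x2,y2)|·|f(y)|·|g(x)| dy dx ≤ C · ‖b‖_{Ċ^{0,β1,β2}} · ‖f‖_{L^{p1}_{x1}L^{p2}_{x2}} · ‖g‖_{L^{q1'}_{x1}L^{q2'}_{x2}}, where ‖b‖_{Ċ^{0,β1,β2}} = sup{ |B(x,y)| / (|x1−y1|^{β1}|x2−y2|^{β2}) : x1 ≠ y1, x2 ≠ y2 } and q_i' is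 the conjugate exponent of q_i. -/
/-!
Since `B(x, y) = 0` when `x1 = y1` or `x2 = y2`, the seminorm of `b` and the size bounds on `K1`, `K2`
dominate the integrand pointwise by a constant times `‖b‖ * k1(x1, y1) * k2(x2, y2) * |f(y)| * |g(x)|`,
where `k_i(s, t) = |s - t| ^ (β_i - d_i)` is a Riesz kernel (`norm_kernel_product_le`). The
Hardy–Littlewood–Sobolev inequality (`exists_hls`) in the variables `(x2, y2)`, for fixed `x1`, `y1`,
bounds the inner double integral by `‖f(y1, ·)‖_{p2} * ‖g(x1, ·)‖_{q2'}`, and the same inequality in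
`(x1, y1)` produces the mixed norms.

The Hardy–Littlewood–Sobolev inequality is proved from the layer-cake formula. With
`θ = 1 / p - 1 / q`, the mass of the Riesz kernel on `S × A` is at most a constant times
`min (|S| * |A| ^ θ) (|A| * |S| ^ θ)` (`exists_rieszKernel_setLIntegral_le`). For superlevel sets
`A = {F > a}` and `S = {G > b}` of normalized functions, the first bound is integrated over
`b ≥ a ^ (p / q')` and the second over `b ≤ a ^ (p / q')`: Chebyshev's inequality controls the factor
raised to the power `θ`, and what remains is the layer-cake integral of `‖F‖_p^p` or `‖G‖_{q'}^{q'}`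
(`hls_normalized`, `hls_abstract`).
-/

open MeasureTheory ENNReal Set

noncomputable section

/-! ### Superlevel sets -/

lemma lintegral_indicator_layer (M : ℝ≥0∞) :
    ∫⁻ a in Ioi (0:ℝ), {a : ℝ | ENNReal.ofReal a < M}.indicator 1 a = M := by
  have hm : MeasurableSet {a : ℝ | ENNReal.ofReal a < M} :=
    measurableSet_lt ENNReal.measurable_ofReal measurable_const
  rw [lintegral_indicator_one hm, Measure.restrict_apply hm]
  by_cases hM : M = ∞
  · subst hM
    have : {a : ℝ | ENNReal.ofReal a < ∞} ∩ Ioi 0 = Ioi 0 := by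
      ext a; simp
    rw [this, Real.volume_Ioi]
  · have : {a : ℝ | ENNReal.ofReal a < M} ∩ Ioi 0 = Ioo 0 M.toReal := by
      ext a
      simp only [mem_inter_iff, mem_ofPred_eq, mem_Ioi, mem_Ioo]
      constructor
      · rintro ⟨h1, h2⟩
        exact ⟨h2, (ENNReal.ofReal_lt_iff_lt_toReal h2.le hM).1 h1⟩
      · rintro ⟨h1, h2⟩
        exact ⟨(ENNReal.ofReal_lt_iff_lt_toReal h1.le hM).2 h2, h1⟩
    rw [this, Real.volume_Ioo, sub_zero, ENNReal.ofReal_toReal hM]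

lemma measurable_layer_uncurry {X : Type*} [MeasurableSpace X] {G : X → ℝ≥0∞}
    (hG : Measurable G) {H : X → ℝ → ℝ≥0∞} (hH : Measurable (Function.uncurry H)) :
    Measurable (Function.uncurry fun (x : X) (a : ℝ) =>
      H x a * {a : ℝ | ENNReal.ofReal a < G x}.indicator 1 a) := by
  refine hH.mul ?_
  have hs : MeasurableSet {z : X × ℝ | ENNReal.ofReal z.2 < G z.1} :=
    measurableSet_lt (ENNReal.measurable_ofReal.comp measurable_snd) (hG.comp measurable_fst)
  exact (measurable_const (a := (1 : ℝ≥0∞))).indicator hs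

/-- Layer-cake formula with a weight `H`. -/
lemma lintegral_mul_layer {X : Type*} [MeasurableSpace X] (μ : Measure X) [SFinite μ]
    {G H : X → ℝ≥0∞} (hG : Measurable G) (hH : Measurable H) :
    ∫⁻ x, H x * G x ∂μ =
      ∫⁻ a in Ioi (0:ℝ), ∫⁻ x in {x | ENNReal.ofReal a < G x}, H x ∂μ := by
  have h1 : ∀ x, H x * G x =
      ∫⁻ a in Ioi (0:ℝ), H x * {a : ℝ | ENNReal.ofReal a < G x}.indicator 1 a := by
    intro x
    rw [lintegral_const_mul, lintegral_indicator_layer]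
    exact (measurable_const (a := (1 : ℝ≥0∞))).indicator
      (measurableSet_lt ENNReal.measurable_ofReal measurable_const)
  simp_rw [h1]
  rw [lintegral_lintegral_swap]
  · refine lintegral_congr fun a => ?_
    rw [← lintegral_indicator (measurableSet_lt measurable_const hG)]
    refine lintegral_congr fun x => ?_
    by_cases h : ENNReal.ofReal a < G x <;> simp [h]
  · exact (measurable_layer_uncurry hG (H := fun x _ => H x)
      (hH.comp measurable_fst)).aemeasurable

lemma measurable_distribution {X : Type*} [MeasurableSpace X] (μ : Measure X)
    (G : X → ℝ≥0∞) : Measurable fun a : ℝ => μ {x | ENNReal.ofReal a < G x} := by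
  refine Antitone.measurable fun a b hab => measure_mono fun x hx => ?_
  exact lt_of_le_of_lt (ENNReal.ofReal_le_ofReal hab) hx

/-- Only the inequality (without the factor `1 / p`) of the layer-cake formula for `‖F‖_p^p`
is needed. -/
lemma lintegral_distribution_mul_rpow_le {X : Type*} [MeasurableSpace X] (μ : Measure X)
    [SFinite μ] {F : X → ℝ≥0∞} (hF : Measurable F) {p : ℝ} (hp : 1 < p) :
    ∫⁻ a in Ioi (0:ℝ), μ {x | ENNReal.ofReal a < F x} * ENNReal.ofReal (a ^ (p - 1)) ≤
      ∫⁻ x, F x ^ p ∂μ := by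
  have h1 : ∀ a ∈ Ioi (0:ℝ),
      μ {x | ENNReal.ofReal a < F x} * ENNReal.ofReal (a ^ (p - 1)) ≤
        ∫⁻ x in {x | ENNReal.ofReal a < F x}, F x ^ (p - 1) ∂μ := by
    intro a ha
    rw [mul_comm, ← setLIntegral_const]
    refine setLIntegral_mono' (measurableSet_lt measurable_const hF) fun x hx => ?_
    rw [← ENNReal.ofReal_rpow_of_pos ha]
    exact ENNReal.rpow_le_rpow (le_of_lt hx) (by linarith)
  refine (setLIntegral_mono' measurableSet_Ioi h1).trans ?_
  rw [← lintegral_mul_layer μ hF (hF.pow_const _)]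
  refine lintegral_mono fun x => le_of_eq ?_
  have := ENNReal.rpow_add_of_nonneg (x := F x) (p - 1) 1 (by linarith) zero_le_one
  rw [sub_add_cancel, ENNReal.rpow_one] at this
  exact this.symm

/-- Chebyshev's inequality. -/
lemma distribution_le {X : Type*} [MeasurableSpace X] (μ : Measure X)
    {F : X → ℝ≥0∞} (hF : Measurable F) {p : ℝ} (hp : 1 < p)
    (h : ∫⁻ x, F x ^ p ∂μ ≤ 1) {a : ℝ} (ha : 0 < a) :
    μ {x | ENNReal.ofReal a < F x} ≤ ENNReal.ofReal (a ^ (-p)) := by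
  have h1 : μ {x | ENNReal.ofReal a < F x} ≤ μ {x | ENNReal.ofReal (a ^ p) ≤ F x ^ p} := by
    refine measure_mono fun x hx => ?_
    rw [mem_ofPred_eq, ← ENNReal.ofReal_rpow_of_pos ha]
    exact ENNReal.rpow_le_rpow (le_of_lt hx) (by linarith)
  have h2 := (mul_meas_ge_le_lintegral₀ (μ := μ) (hF.pow_const p).aemeasurable
    (ENNReal.ofReal (a ^ p))).trans h
  rw [Real.rpow_neg ha.le, ENNReal.ofReal_inv_of_pos (Real.rpow_pos_of_pos ha p)]
  refine h1.trans ?_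
  rw [ENNReal.le_inv_iff_mul_le, mul_comm]
  exact h2

lemma lintegral_Ioc_rpow {s A : ℝ} (hs : s < 1) (hA : 0 < A) :
    ∫⁻ b in Ioc 0 A, ENNReal.ofReal (b ^ (-s)) = ENNReal.ofReal (A ^ (1 - s) / (1 - s)) := by
  have hi : IntervalIntegrable (fun b : ℝ => b ^ (-s)) volume 0 A :=
    intervalIntegral.intervalIntegrable_rpow' (by linarith)
  rw [intervalIntegrable_iff_integrableOn_Ioc_of_le hA.le] at hi
  rw [← ofReal_integral_eq_lintegral_ofReal hi, ← intervalIntegral.integral_of_le hA.le,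
    integral_rpow (Or.inl (by linarith))]
  · rw [Real.zero_rpow (by linarith), sub_zero, neg_add_eq_sub]
  · exact (ae_restrict_iff' measurableSet_Ioc).2
      (.of_forall fun b hb => Real.rpow_nonneg hb.1.le _)

/-! ### The Hardy–Littlewood–Sobolev inequality -/

/-- One half of the double integral of `min (v a * w b ^ θ) (w b * v a ^ θ)`: the part below the
curve `b = a ^ (p / r)`. The exponents are chosen so that the inner integral is a multiple of
`a ^ (p - 1)`. -/
lemma lintegral_below_curve {X Y : Type*} [MeasurableSpace X] [MeasurableSpace Y]
    (μ : Measure X) (ν : Measure Y) [SFinite ν] {F : Y → ℝ≥0∞} {G : X → ℝ≥0∞}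
    (hF : Measurable F) (hG : Measurable G) {p r θ : ℝ} (hp : 1 < p) (hr : 1 < r)
    (hθ : 0 < θ) (hθr : r * θ < 1) (hθ' : 1 / p + 1 / r = 1 + θ)
    (hF1 : ∫⁻ x, F x ^ p ∂ν ≤ 1) (hG1 : ∫⁻ x, G x ^ r ∂μ ≤ 1) :
    ∫⁻ a in Ioi (0:ℝ), ∫⁻ b in Ioc 0 (a ^ (p / r)),
      ν {y | ENNReal.ofReal a < F y} * μ {x | ENNReal.ofReal b < G x} ^ θ ≤
      ENNReal.ofReal (1 / (1 - r * θ)) := by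
  calc _ ≤ ∫⁻ a in Ioi (0:ℝ), ENNReal.ofReal (1 / (1 - r * θ)) *
        (ν {y | ENNReal.ofReal a < F y} * ENNReal.ofReal (a ^ (p - 1))) := by
        refine setLIntegral_mono' measurableSet_Ioi fun a ha => ?_
        have ha : 0 < a := ha
        rw [lintegral_const_mul _ ((measurable_distribution μ G).pow_const θ), mul_left_comm]
        refine mul_le_mul_right ?_ _
        calc _ ≤ ∫⁻ b in Ioc 0 (a ^ (p / r)), ENNReal.ofReal (b ^ (-(r * θ))) := by
              refine setLIntegral_mono' measurableSet_Ioc fun b hb => ?_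
              rw [← neg_mul, Real.rpow_mul hb.1.le,
                ← ENNReal.ofReal_rpow_of_pos (Real.rpow_pos_of_pos hb.1 _)]
              exact ENNReal.rpow_le_rpow (distribution_le μ hG hr hG1 hb.1) hθ.le
          _ = _ := by
              rw [lintegral_Ioc_rpow hθr (Real.rpow_pos_of_pos ha _), ← Real.rpow_mul ha.le,
                ← ENNReal.ofReal_mul (one_div_nonneg.2 (by linarith))]
              have : p / r * (1 - r * θ) = p - 1 := by
                have hθe : θ = 1 / p + 1 / r - 1 := by linarith
                rw [hθe]; field_simp; ring
              rw [this]; congr 1; ring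
    _ ≤ _ := by
        rw [lintegral_const_mul _ ((measurable_distribution ν F).fun_mul (by fun_prop))]
        exact mul_le_of_le_one_right' ((lintegral_distribution_mul_rpow_le ν hF hp).trans hF1)

/-- By the layer-cake formula the form is a double integral, over heights `a` of `F` and `b` of `G`,
of the mass of the kernel on a product of superlevel sets. That mass is at most
`D * min (v a * w b ^ θ) (w b * v a ^ θ)`, where `v` and `w` are the distribution functions; the
first bound is used below the curve `b = a ^ (p / r)`, the second above it. -/
lemma hls_normalized {X Y : Type*} [MeasurableSpace X] [MeasurableSpace Y]
    (μ : Measure X) (ν : Measure Y) [SFinite μ] [SFinite ν]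
    {k : X → Y → ℝ≥0∞} (hk : Measurable (Function.uncurry k))
    {F : Y → ℝ≥0∞} {G : X → ℝ≥0∞} (hF : Measurable F) (hG : Measurable G)
    {p r θ : ℝ} (hp : 1 < p) (hr : 1 < r)
    (hθ : 0 < θ) (hθp : p * θ < 1) (hθr : r * θ < 1) (hθ' : 1 / p + 1 / r = 1 + θ)
    {D : ℝ≥0∞} (hk1 : ∀ x, ∀ A, MeasurableSet A → ∫⁻ y in A, k x y ∂ν ≤ D * ν A ^ θ)
    (hk2 : ∀ y, ∀ A, MeasurableSet A → ∫⁻ x in A, k x y ∂μ ≤ D * μ A ^ θ)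
    (hF1 : ∫⁻ x, F x ^ p ∂ν ≤ 1) (hG1 : ∫⁻ x, G x ^ r ∂μ ≤ 1) :
    ∫⁻ x, ∫⁻ y, k x y * F y * G x ∂ν ∂μ ≤
      D * (ENNReal.ofReal (1 / (1 - r * θ)) + ENNReal.ofReal (1 / (1 - p * θ))) := by
  set v : ℝ → ℝ≥0∞ := fun a => ν {y | ENNReal.ofReal a < F y} with hv
  set w : ℝ → ℝ≥0∞ := fun b => μ {x | ENNReal.ofReal b < G x} with hw
  have hvm : Measurable v := measurable_distribution ν F
  have hwm : Measurable w := measurable_distribution μ G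
  have hFs : ∀ a : ℝ, MeasurableSet {y | ENNReal.ofReal a < F y} := fun a =>
    measurableSet_lt measurable_const hF
  have hGs : ∀ a : ℝ, MeasurableSet {y | ENNReal.ofReal a < G y} := fun a =>
    measurableSet_lt measurable_const hG
  have hkF : Measurable (Function.uncurry fun x y => k x y * F y) :=
    hk.mul (hF.comp measurable_snd)
  have hkx : ∀ x, Measurable (k x) := fun x => hk.of_uncurry_left
  have hky : ∀ y, Measurable (fun x => k x y) := fun y => hk.of_uncurry_right
  have e1 : ∫⁻ x, ∫⁻ y, k x y * F y * G x ∂ν ∂μ =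
      ∫⁻ b in Ioi (0:ℝ), ∫⁻ a in Ioi (0:ℝ), ∫⁻ y in {y | ENNReal.ofReal a < F y},
        ∫⁻ x in {x | ENNReal.ofReal b < G x}, k x y ∂μ ∂ν := by
    have : ∀ x, ∫⁻ y, k x y * F y * G x ∂ν = (∫⁻ y, k x y * F y ∂ν) * G x := fun x =>
      lintegral_mul_const _ ((hkx x).mul hF)
    simp_rw [this]
    rw [lintegral_mul_layer μ hG hkF.lintegral_prod_right]
    refine lintegral_congr fun b => ?_
    rw [lintegral_lintegral_swap hkF.aemeasurable]
    have : ∀ y, ∫⁻ x in {x | ENNReal.ofReal b < G x}, k x y * F y ∂μ =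
      (∫⁻ x in {x | ENNReal.ofReal b < G x}, k x y ∂μ) * F y := fun y =>
      lintegral_mul_const _ (hky y)
    simp_rw [this]
    exact lintegral_mul_layer ν hF hk.lintegral_prod_left'
  have b1 : ∀ a b : ℝ, ∫⁻ y in {y | ENNReal.ofReal a < F y},
        ∫⁻ x in {x | ENNReal.ofReal b < G x}, k x y ∂μ ∂ν ≤ D * (v a * w b ^ θ) := by
    intro a b
    refine (lintegral_mono fun y => hk2 y _ (hGs b)).trans ?_
    rw [setLIntegral_const, mul_assoc, mul_comm (v a)]
  have b2 : ∀ a b : ℝ, ∫⁻ y in {y | ENNReal.ofReal a < F y},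
        ∫⁻ x in {x | ENNReal.ofReal b < G x}, k x y ∂μ ∂ν ≤ D * (w b * v a ^ θ) := by
    intro a b
    rw [lintegral_lintegral_swap (f := fun y x => k x y) (hk.comp measurable_swap).aemeasurable]
    refine (lintegral_mono fun y => hk1 y _ (hFs a)).trans ?_
    rw [setLIntegral_const, mul_assoc, mul_comm (w b)]
  set S1 : ℝ → ℝ → ℝ≥0∞ := fun a b => (Ioc 0 (a ^ (p / r))).indicator
    (fun b => v a * w b ^ θ) b with hS1
  set S2 : ℝ → ℝ → ℝ≥0∞ := fun b a => (Ioc 0 (b ^ (r / p))).indicator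
    (fun a => w b * v a ^ θ) a with hS2
  have hS1m : Measurable (Function.uncurry S1) := by
    have : MeasurableSet {z : ℝ × ℝ | z.2 ∈ Ioc 0 (z.1 ^ (p / r))} :=
      (measurableSet_lt measurable_const measurable_snd).inter
        (measurableSet_le measurable_snd (by fun_prop))
    exact (((hvm.comp measurable_fst).mul ((hwm.comp measurable_snd).pow_const θ))).indicator this
  have hS2m : Measurable (Function.uncurry S2) := by
    have : MeasurableSet {z : ℝ × ℝ | z.2 ∈ Ioc 0 (z.1 ^ (r / p))} :=
      (measurableSet_lt measurable_const measurable_snd).inter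
        (measurableSet_le measurable_snd (by fun_prop))
    exact (((hwm.comp measurable_fst).mul ((hvm.comp measurable_snd).pow_const θ))).indicator this
  have hpt : ∀ b ∈ Ioi (0:ℝ), ∀ a ∈ Ioi (0:ℝ), ∫⁻ y in {y | ENNReal.ofReal a < F y},
        ∫⁻ x in {x | ENNReal.ofReal b < G x}, k x y ∂μ ∂ν ≤ D * (S1 a b + S2 b a) := by
    intro b hb a ha
    have hb : 0 < b := hb
    have ha : 0 < a := ha
    rcases le_total b (a ^ (p / r)) with h | h
    · have : S1 a b = v a * w b ^ θ := indicator_of_mem (show b ∈ Ioc 0 (a ^ (p / r)) from ⟨hb, h⟩) _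
      refine (b1 a b).trans (mul_le_mul_right ?_ _)
      rw [this]; exact le_self_add
    · have h' : a ≤ b ^ (r / p) := by
        have := Real.rpow_le_rpow (Real.rpow_nonneg ha.le _) h (z := r / p) (by positivity)
        rwa [← Real.rpow_mul ha.le, show p / r * (r / p) = 1 by field_simp, Real.rpow_one] at this
      have : S2 b a = w b * v a ^ θ := indicator_of_mem (show a ∈ Ioc 0 (b ^ (r / p)) from ⟨ha, h'⟩) _
      refine (b2 a b).trans (mul_le_mul_right ?_ _)
      rw [this]; exact le_add_self
  rw [e1]
  have hsub : ∀ A : ℝ, Ioc 0 A ∩ Ioi 0 = Ioc 0 A := fun A =>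
    inter_eq_left.2 fun x hx => hx.1
  calc _ ≤ ∫⁻ b in Ioi (0:ℝ), ∫⁻ a in Ioi (0:ℝ), D * (S1 a b + S2 b a) :=
        setLIntegral_mono' measurableSet_Ioi fun b hb =>
          setLIntegral_mono' measurableSet_Ioi fun a ha => hpt b hb a ha
    _ = D * ((∫⁻ a in Ioi (0:ℝ), ∫⁻ b in Ioi (0:ℝ), S1 a b) +
          ∫⁻ b in Ioi (0:ℝ), ∫⁻ a in Ioi (0:ℝ), S2 b a) := by
        have m1 : ∀ b, Measurable fun a => S1 a b := fun b => hS1m.of_uncurry_right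
        have m2 : ∀ b, Measurable (S2 b) := fun b => hS2m.of_uncurry_left
        have m3 : Measurable fun b => ∫⁻ a in Ioi (0:ℝ), S1 a b := hS1m.lintegral_prod_left'
        have m4 : Measurable fun b => ∫⁻ a in Ioi (0:ℝ), S2 b a := hS2m.lintegral_prod_right
        rw [lintegral_lintegral_swap hS1m.aemeasurable, ← lintegral_add_left m3,
          ← lintegral_const_mul _ (m3.fun_add m4)]
        refine lintegral_congr fun b => ?_
        rw [lintegral_const_mul _ ((m1 b).fun_add (m2 b)), lintegral_add_left (m1 b)]
    _ ≤ _ := by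
        refine mul_le_mul_right (add_le_add ?_ ?_) _
        · refine le_trans (le_of_eq ?_)
            (lintegral_below_curve μ ν hF hG hp hr hθ hθr hθ' hF1 hG1)
          refine lintegral_congr fun a => ?_
          rw [lintegral_indicator measurableSet_Ioc, Measure.restrict_restrict measurableSet_Ioc,
            hsub]
        · refine le_trans (le_of_eq ?_)
            (lintegral_below_curve ν μ hG hF hr hp hθ hθp (by linarith) hG1 hF1)
          refine lintegral_congr fun a => ?_
          rw [lintegral_indicator measurableSet_Ioc, Measure.restrict_restrict measurableSet_Ioc,
            hsub]

lemma lintegral_normalized_rpow_le {Z : Type*} [MeasurableSpace Z] (η : Measure Z)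
    (H : Z → ℝ≥0∞) (s : ℝ) (hH : Measurable H) (hs : 0 < s) (L : ℝ≥0∞)
    (hL : L = (∫⁻ y, H y ^ s ∂η) ^ (1 / s)) (hL0 : L ≠ 0) (hLt : L ≠ ∞) :
    ∫⁻ y, (L⁻¹ * H y) ^ s ∂η ≤ 1 := by
  have hLs : ∫⁻ y, H y ^ s ∂η = L ^ s := by
    rw [hL, ← ENNReal.rpow_mul, one_div_mul_cancel hs.ne', ENNReal.rpow_one]
  simp_rw [ENNReal.mul_rpow_of_nonneg _ _ hs.le]
  rw [lintegral_const_mul _ (hH.pow_const s), hLs, ← ENNReal.mul_rpow_of_nonneg _ _ hs.le,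
    ENNReal.inv_mul_cancel hL0 hLt, ENNReal.one_rpow]

/-- The Hardy–Littlewood–Sobolev inequality for any kernel whose integral over a set of measure `m`
in either variable is at most `D * m ^ θ`; the general case follows from `hls_normalized` by
homogeneity. -/
lemma hls_abstract {X Y : Type*} [MeasurableSpace X] [MeasurableSpace Y]
    (μ : Measure X) (ν : Measure Y) [SFinite μ] [SFinite ν]
    {k : X → Y → ℝ≥0∞} (hk : Measurable (Function.uncurry k))
    {F : Y → ℝ≥0∞} {G : X → ℝ≥0∞} (hF : Measurable F) (hG : Measurable G)
    {p r θ : ℝ} (hp : 1 < p) (hr : 1 < r)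
    (hθ : 0 < θ) (hθp : p * θ < 1) (hθr : r * θ < 1) (hθ' : 1 / p + 1 / r = 1 + θ)
    {D : ℝ≥0∞} (hD : D ≠ 0)
    (hk1 : ∀ x, ∀ A, MeasurableSet A → ∫⁻ y in A, k x y ∂ν ≤ D * ν A ^ θ)
    (hk2 : ∀ y, ∀ A, MeasurableSet A → ∫⁻ x in A, k x y ∂μ ≤ D * μ A ^ θ) :
    ∫⁻ x, ∫⁻ y, k x y * F y * G x ∂ν ∂μ ≤
      D * (ENNReal.ofReal (1 / (1 - r * θ)) + ENNReal.ofReal (1 / (1 - p * θ))) *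
        (∫⁻ y, F y ^ p ∂ν) ^ (1 / p) * (∫⁻ x, G x ^ r ∂μ) ^ (1 / r) := by
  have hp0 : 0 < p := by linarith
  have hr0 : 0 < r := by linarith
  set N := (∫⁻ y, F y ^ p ∂ν) ^ (1 / p) with hN
  set M := (∫⁻ x, G x ^ r ∂μ) ^ (1 / r) with hM
  set E := D * (ENNReal.ofReal (1 / (1 - r * θ)) + ENNReal.ofReal (1 / (1 - p * θ))) with hE
  have hE0 : E ≠ 0 := by
    refine mul_ne_zero hD ?_
    have : 0 < ENNReal.ofReal (1 / (1 - r * θ)) :=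
      ENNReal.ofReal_pos.2 (one_div_pos.2 (by linarith))
    exact (lt_of_lt_of_le this le_self_add).ne'
  by_cases hN0 : N = 0
  · have h0 : F =ᵐ[ν] 0 := by
      rw [hN, ENNReal.rpow_eq_zero_iff_of_pos (by positivity),
        lintegral_eq_zero_iff (hF.pow_const p)] at hN0
      filter_upwards [hN0] with y hy
      simpa [ENNReal.rpow_eq_zero_iff_of_pos hp0] using hy
    have : ∀ x, ∫⁻ y, k x y * F y * G x ∂ν = 0 := by
      intro x
      rw [← lintegral_zero]
      refine lintegral_congr_ae ?_
      filter_upwards [h0] with y hy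
      simp [hy]
    simp [this]
  by_cases hM0 : M = 0
  · have h0 : G =ᵐ[μ] 0 := by
      rw [hM, ENNReal.rpow_eq_zero_iff_of_pos (by positivity),
        lintegral_eq_zero_iff (hG.pow_const r)] at hM0
      filter_upwards [hM0] with y hy
      simpa [ENNReal.rpow_eq_zero_iff_of_pos hr0] using hy
    have : ∫⁻ x, ∫⁻ y, k x y * F y * G x ∂ν ∂μ = ∫⁻ x, 0 ∂μ := by
      refine lintegral_congr_ae ?_
      filter_upwards [h0] with y hy
      simp [hy]
    simp [this]
  by_cases hNt : N = ∞
  · rw [hNt, ENNReal.mul_top hE0, ENNReal.top_mul hM0]; exact le_top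
  by_cases hMt : M = ∞
  · rw [hMt, ENNReal.mul_top (mul_ne_zero hE0 hN0)]; exact le_top
  have key := hls_normalized μ ν hk (hF.const_mul N⁻¹) (hG.const_mul M⁻¹) hp hr hθ hθp hθr hθ'
    hk1 hk2 (lintegral_normalized_rpow_le ν F p hF hp0 N hN hN0 hNt) (lintegral_normalized_rpow_le μ G r hG hr0 M hM hM0 hMt)
  have hscale : ∫⁻ x, ∫⁻ y, k x y * F y * G x ∂ν ∂μ =
      N * M * ∫⁻ x, ∫⁻ y, k x y * (N⁻¹ * F y) * (M⁻¹ * G x) ∂ν ∂μ := by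
    have hm : Measurable (Function.uncurry fun x y => k x y * (N⁻¹ * F y) * (M⁻¹ * G x)) :=
      (hk.mul ((hF.comp measurable_snd).const_mul _)).mul ((hG.comp measurable_fst).const_mul _)
    rw [← lintegral_const_mul _ hm.lintegral_prod_right]
    refine lintegral_congr fun x => ?_
    rw [← lintegral_const_mul _ hm.of_uncurry_left]
    refine lintegral_congr fun y => ?_
    calc k x y * F y * G x = (N * N⁻¹) * (M * M⁻¹) * (k x y * F y * G x) := by
          rw [ENNReal.mul_inv_cancel hN0 hNt, ENNReal.mul_inv_cancel hM0 hMt, one_mul, one_mul]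
      _ = _ := by ring
  rw [hscale]
  calc _ ≤ N * M * E := mul_le_mul_right key _
    _ = _ := by ring

/-! ### The Riesz kernel -/

/-- The Riesz kernel `|x - y| ^ (d * θ - d)` on `ℝ^d`, with values in `[0, ∞]`; on the diagonal it
takes the harmless value `0 ^ (d * θ - d)` of real powers. -/
def rieszKernel (d : ℕ) (θ : ℝ) (x y : Euc d) : ℝ≥0∞ :=
  ENNReal.ofReal (dist x y ^ ((d : ℝ) * θ - d))

lemma measurable_rieszKernel (d : ℕ) (θ : ℝ) :
    Measurable (Function.uncurry (rieszKernel d θ)) := by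
  have : Measurable fun z : Euc d × Euc d => dist z.1 z.2 := measurable_dist
  exact ENNReal.measurable_ofReal.comp (this.pow_const _)

lemma rieszKernel_comm (d : ℕ) (θ : ℝ) (x y : Euc d) :
    rieszKernel d θ x y = rieszKernel d θ y x := by
  simp only [rieszKernel, dist_comm]

lemma volume_rieszKernel_gt_le {d : ℕ} (hd : 1 ≤ d) {θ : ℝ} (hθ1 : θ < 1) (x : Euc d) {t : ℝ}
    (ht : 0 < t) :
    volume {y | ENNReal.ofReal t < rieszKernel d θ x y} ≤
      ENNReal.ofReal (t ^ (-(1 / (1 - θ)))) * volume (Metric.ball (0 : Euc d) 1) := by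
  have hd0 : (0 : ℝ) < d := by exact_mod_cast hd
  have : Nonempty (Fin d) := ⟨⟨0, hd⟩⟩
  have h1θ : 0 < 1 - θ := by linarith
  have hsub : {y | ENNReal.ofReal t < rieszKernel d θ x y} ⊆
      Metric.ball x (t ^ (-(1 / (d * (1 - θ))))) := by
    intro y hy
    rw [Metric.mem_ball, dist_comm]
    by_contra! hcon
    have h2 := Real.rpow_le_rpow_of_nonpos (Real.rpow_pos_of_pos ht _) hcon
      (show (d : ℝ) * θ - d ≤ 0 by nlinarith)
    rw [← Real.rpow_mul ht.le, show -(1 / (d * (1 - θ))) * ((d : ℝ) * θ - d) = 1 by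
      field_simp; ring, Real.rpow_one] at h2
    exact absurd hy (not_lt.2 (ENNReal.ofReal_le_ofReal h2))
  refine (measure_mono hsub).trans (le_of_eq ?_)
  rw [Measure.addHaar_ball _ _ (Real.rpow_nonneg ht.le _), finrank_euclideanSpace_fin,
    ← Real.rpow_natCast, ← Real.rpow_mul ht.le]
  congr 3
  field_simp

/-- The integral of the Riesz kernel over a set of measure `m` is at most a constant times `m ^ θ`,
which is the order of its integral over a ball centred at `x`. -/
lemma exists_rieszKernel_setLIntegral_le {d : ℕ} (hd : 1 ≤ d) {θ : ℝ} (hθ : 0 < θ) (hθ1 : θ < 1) :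
    ∃ D : ℝ≥0∞, D ≠ 0 ∧ D ≠ ∞ ∧ ∀ (x : Euc d) (A : Set (Euc d)), MeasurableSet A →
      ∫⁻ y in A, rieszKernel d θ x y ≤ D * volume A ^ θ := by
  have h1θ : 0 < 1 - θ := by linarith
  set ω := volume (Metric.ball (0 : Euc d) 1) with hω
  have hωt : ω ≠ ∞ := measure_ball_lt_top.ne
  have hD0 : 1 + ENNReal.ofReal ((1 - θ) / θ) * ω ≠ 0 :=
    (lt_of_lt_of_le one_pos le_self_add).ne'
  refine ⟨1 + ENNReal.ofReal ((1 - θ) / θ) * ω, hD0,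
    ENNReal.add_ne_top.2 ⟨one_ne_top, ENNReal.mul_ne_top ofReal_ne_top hωt⟩, ?_⟩
  intro x A hA
  by_cases hA0 : volume A = 0
  · rw [setLIntegral_measure_zero _ _ hA0]; exact zero_le
  by_cases hAt : volume A = ∞
  · rw [hAt, ENNReal.top_rpow_of_pos hθ, ENNReal.mul_top hD0]; exact le_top
  obtain ⟨m, hm, hAm⟩ : ∃ m : ℝ, 0 < m ∧ volume A = ENNReal.ofReal m :=
    ⟨(volume A).toReal, ENNReal.toReal_pos hA0 hAt, (ENNReal.ofReal_toReal hAt).symm⟩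
  -- the height at which a superlevel set of the kernel has measure comparable to `m`
  set T := m ^ (θ - 1) with hT
  have hTpos : 0 < T := Real.rpow_pos_of_pos hm _
  have hkm : Measurable (rieszKernel d θ x) := (measurable_rieszKernel d θ).of_uncurry_left
  have hlayer := lintegral_mul_layer (volume.restrict A) hkm
    (measurable_const (a := (1 : ℝ≥0∞)))
  simp only [one_mul, setLIntegral_one] at hlayer
  rw [hlayer, ← Ioc_union_Ioi_eq_Ioi hTpos.le,
    lintegral_union measurableSet_Ioi (Ioc_disjoint_Ioi le_rfl), add_mul, one_mul]
  refine add_le_add ?_ ?_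
  · calc _ ≤ ∫⁻ _ in Ioc 0 T, ENNReal.ofReal m := by
          refine lintegral_mono fun t => ?_
          rw [← hAm]
          exact (measure_mono (subset_univ _)).trans (by simp)
      _ = ENNReal.ofReal m * ENNReal.ofReal T := by
          rw [setLIntegral_const, Real.volume_Ioc, sub_zero]
      _ = volume A ^ θ := by
          rw [hAm, ENNReal.ofReal_rpow_of_pos hm, ← ENNReal.ofReal_mul hm.le, hT]
          congr 1
          nth_rewrite 1 [← Real.rpow_one m]
          rw [← Real.rpow_add hm]
          congr 1; ring
      _ ≤ _ := le_rfl
  · have hγ : -(1 / (1 - θ)) < -1 := by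
      rw [neg_lt_neg_iff, lt_div_iff₀ h1θ]; linarith
    calc _ ≤ ∫⁻ t in Ioi T, ENNReal.ofReal (t ^ (-(1 / (1 - θ)))) * ω := by
          refine setLIntegral_mono' measurableSet_Ioi fun t ht => ?_
          exact (Measure.restrict_apply_le _ _).trans
            (volume_rieszKernel_gt_le hd hθ1 x (hTpos.trans ht))
      _ = ENNReal.ofReal ((1 - θ) / θ * m ^ θ) * ω := by
          rw [lintegral_mul_const _ (by fun_prop), ← ofReal_integral_eq_lintegral_ofReal
            (integrableOn_Ioi_rpow_of_lt hγ hTpos), integral_Ioi_rpow_of_lt hγ hTpos, hT,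
            ← Real.rpow_mul hm.le]
          · congr 2
            have e : (θ - 1) * (-(1 / (1 - θ)) + 1) = θ := by field_simp; ring
            have e' : -(1 / (1 - θ)) + 1 = - (θ / (1 - θ)) := by field_simp; ring
            rw [e, e']
            field_simp
          · exact (ae_restrict_iff' measurableSet_Ioi).2
              (.of_forall fun t ht => Real.rpow_nonneg (hTpos.trans ht).le _)
      _ = _ := by
          rw [hAm, ENNReal.ofReal_rpow_of_pos hm, ENNReal.ofReal_mul (by positivity)]
          ring

/-- The Hardy–Littlewood–Sobolev inequality in bilinear form. -/
lemma exists_hls {d : ℕ} (hd : 1 ≤ d) {p q r : ℝ} (hp : 1 < p) (hpq : p < q)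
    (hr : 1 / q + 1 / r = 1) :
    ∃ C : ℝ≥0∞, C ≠ ∞ ∧ ∀ F G : Euc d → ℝ≥0∞, Measurable F → Measurable G →
      ∫⁻ x, ∫⁻ y, rieszKernel d (1 / p - 1 / q) x y * F y * G x ≤
        C * (∫⁻ y, F y ^ p) ^ (1 / p) * (∫⁻ x, G x ^ r) ^ (1 / r) := by
  have hp0 : 0 < p := by linarith
  have hq0 : 0 < q := by linarith
  have hip : 1 / p < 1 := by rw [div_lt_one hp0]; exact hp
  have hiq : 1 / q < 1 / p := one_div_lt_one_div_of_lt hp0 hpq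
  have hiq0 : 0 < 1 / q := by positivity
  have hr0 : 0 < r := by
    rw [← one_div_pos]; linarith
  have hr1 : 1 < r := by
    have : 1 / r < 1 := by linarith
    rwa [div_lt_one hr0] at this
  have hθ : 0 < 1 / p - 1 / q := by linarith
  have hθp : p * (1 / p - 1 / q) < 1 := by
    have : p * (1 / p) = 1 := by field_simp
    nlinarith
  have hθr : r * (1 / p - 1 / q) < 1 := by
    have : r * (1 / r) = 1 := by field_simp
    nlinarith
  obtain ⟨D, hD0, hDt, hD⟩ := exists_rieszKernel_setLIntegral_le hd hθ
    (show 1 / p - 1 / q < 1 by linarith)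
  refine ⟨_, ?_, fun F G hF hG => hls_abstract volume volume (measurable_rieszKernel d _) hF hG hp
    hr1 hθ hθp hθr (by linarith) hD0 hD ?_⟩
  · exact ENNReal.mul_ne_top hDt (ENNReal.add_ne_top.2 ⟨ofReal_ne_top, ofReal_ne_top⟩)
  · intro y A hA
    simp_rw [rieszKernel_comm d _ _ y]
    exact hD y A hA

/-! ### The bi-parameter estimate -/

lemma norm_kernel_le {d : ℕ} {α CK : ℝ} {K : Euc d → Euc d → ℂ} (hK : IsCZKernel d α CK K)
    (hCK : 0 ≤ CK) (θ : ℝ) {x y : Euc d} (h : x ≠ y) :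
    ENNReal.ofReal (dist x y ^ ((d : ℝ) * θ)) * (‖K x y‖₊ : ℝ≥0∞) ≤
      ENNReal.ofReal CK * rieszKernel d θ x y := by
  have hpos : 0 < dist x y := dist_pos.2 h
  rw [← enorm_eq_nnnorm, ← ofReal_norm, ← ENNReal.ofReal_mul (by positivity), rieszKernel,
    ← ENNReal.ofReal_mul hCK]
  refine ENNReal.ofReal_le_ofReal ?_
  calc _ ≤ dist x y ^ ((d : ℝ) * θ) * (CK / dist x y ^ (d : ℝ)) :=
        mul_le_mul_of_nonneg_left (hK.1 x y h) (by positivity)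
    _ = _ := by rw [Real.rpow_sub hpos]; ring

/-- The seminorm `‖b‖_{Ċ^{0,β1,β2}}`. -/
def biHolder {d1 d2 : ℕ} (β1 β2 : ℝ) (b : Euc d1 × Euc d2 → ℂ) : ℝ≥0∞ :=
  ⨆ (x1 : Euc d1) (y1 : Euc d1) (x2 : Euc d2) (y2 : Euc d2) (_ : x1 ≠ y1) (_ : x2 ≠ y2),
    ENNReal.ofReal (‖b (x1, x2) - b (x1, y2) - b (y1, x2) + b (y1, y2)‖ /
      (dist x1 y1 ^ β1 * dist x2 y2 ^ β2))

lemma norm_biB_le {d1 d2 : ℕ} (β1 β2 : ℝ) (b : Euc d1 × Euc d2 → ℂ) {x y : Euc d1 × Euc d2}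
    (h1 : x.1 ≠ y.1) (h2 : x.2 ≠ y.2) :
    (‖biB b x y‖₊ : ℝ≥0∞) ≤ biHolder β1 β2 b *
      (ENNReal.ofReal (dist x.1 y.1 ^ β1) * ENNReal.ofReal (dist x.2 y.2 ^ β2)) := by
  have p1 : 0 < dist x.1 y.1 := dist_pos.2 h1
  have p2 : 0 < dist x.2 y.2 := dist_pos.2 h2
  have hle : ENNReal.ofReal (‖biB b x y‖ / (dist x.1 y.1 ^ β1 * dist x.2 y.2 ^ β2)) ≤
      biHolder β1 β2 b :=
    le_iSup_of_le x.1 <| le_iSup_of_le y.1 <| le_iSup_of_le x.2 <| le_iSup_of_le y.2 <|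
      le_iSup_of_le h1 <| le_iSup_of_le h2 le_rfl
  refine le_trans (le_of_eq ?_) (mul_le_mul_left hle _)
  rw [← ENNReal.ofReal_mul (by positivity), ← ENNReal.ofReal_mul (by positivity),
    div_mul_cancel₀ _ (by positivity), ofReal_norm, enorm_eq_nnnorm]

lemma norm_kernel_product_le {d1 d2 : ℕ} {α1 α2 CK1 CK2 : ℝ} {K1 : Euc d1 → Euc d1 → ℂ}
    {K2 : Euc d2 → Euc d2 → ℂ} (hK1 : IsCZKernel d1 α1 CK1 K1) (hK2 : IsCZKernel d2 α2 CK2 K2)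
    (hCK1 : 0 ≤ CK1) (hCK2 : 0 ≤ CK2) (θ1 θ2 : ℝ) (b : Euc d1 × Euc d2 → ℂ)
    (x y : Euc d1 × Euc d2) :
    (‖biB b x y‖₊ : ℝ≥0∞) * (‖K1 x.1 y.1‖₊ : ℝ≥0∞) * (‖K2 x.2 y.2‖₊ : ℝ≥0∞) ≤
      ENNReal.ofReal CK1 * ENNReal.ofReal CK2 * biHolder (d1 * θ1) (d2 * θ2) b *
        (rieszKernel d1 θ1 x.1 y.1 * rieszKernel d2 θ2 x.2 y.2) := by
  by_cases h1 : x.1 = y.1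
  · simp [biB, h1]
  by_cases h2 : x.2 = y.2
  · simp [biB, h2]
  calc _ ≤ biHolder (d1 * θ1) (d2 * θ2) b * (ENNReal.ofReal (dist x.1 y.1 ^ (d1 * θ1)) *
          ENNReal.ofReal (dist x.2 y.2 ^ (d2 * θ2))) * (‖K1 x.1 y.1‖₊ : ℝ≥0∞) *
          (‖K2 x.2 y.2‖₊ : ℝ≥0∞) := by
        gcongr; exact norm_biB_le _ _ b h1 h2
    _ = biHolder (d1 * θ1) (d2 * θ2) b *
          ((ENNReal.ofReal (dist x.1 y.1 ^ (d1 * θ1)) * (‖K1 x.1 y.1‖₊ : ℝ≥0∞)) *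
          (ENNReal.ofReal (dist x.2 y.2 ^ (d2 * θ2)) * (‖K2 x.2 y.2‖₊ : ℝ≥0∞))) := by ring
    _ ≤ biHolder (d1 * θ1) (d2 * θ2) b * ((ENNReal.ofReal CK1 * rieszKernel d1 θ1 x.1 y.1) *
          (ENNReal.ofReal CK2 * rieszKernel d2 θ2 x.2 y.2)) :=
        mul_le_mul_right (mul_le_mul' (norm_kernel_le hK1 hCK1 θ1 h1)
          (norm_kernel_le hK2 hCK2 θ2 h2)) _
    _ = _ := by ring

lemma mixedNorm_ofReal {d1 d2 : ℕ} {p1 p2 : ℝ} (hp1 : 0 ≤ p1) (hp2 : 0 ≤ p2)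
    (f : Euc d1 × Euc d2 → ℂ) :
    mixedNorm (ENNReal.ofReal p1) (ENNReal.ofReal p2) f =
      (∫⁻ x1, ((∫⁻ x2, (‖f (x1, x2)‖₊ : ℝ≥0∞) ^ p2) ^ (1 / p2)) ^ p1) ^ (1 / p1) := by
  simp only [mixedNorm, lpNormENN, ofReal_ne_top, if_false, ENNReal.toReal_ofReal hp1,
    ENNReal.toReal_ofReal hp2]

lemma lintegral_prod_prod_comm {X Y : Type*} [MeasurableSpace X] [MeasurableSpace Y]
    (μ : Measure X) (ν : Measure Y) [SFinite μ] [SFinite ν]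
    {Φ : (X × Y) × (X × Y) → ℝ≥0∞} (hΦ : Measurable Φ) :
    ∫⁻ x, ∫⁻ y, Φ (x, y) ∂(μ.prod ν) ∂(μ.prod ν) =
      ∫⁻ x1, ∫⁻ y1, ∫⁻ x2, ∫⁻ y2, Φ ((x1, x2), (y1, y2)) ∂ν ∂ν ∂μ ∂μ := by
  rw [lintegral_prod _ hΦ.lintegral_prod_right'.aemeasurable]
  refine lintegral_congr fun x1 => ?_
  have h : ∀ x2, ∫⁻ y, Φ ((x1, x2), y) ∂(μ.prod ν) =
      ∫⁻ y1, ∫⁻ y2, Φ ((x1, x2), (y1, y2)) ∂ν ∂μ := fun x2 =>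
    lintegral_prod _ (hΦ.comp measurable_prodMk_left).aemeasurable
  simp_rw [h]
  refine lintegral_lintegral_swap ?_
  have : Measurable fun z : (Y × X) × Y => Φ ((x1, z.1.1), (z.1.2, z.2)) :=
    hΦ.comp (by fun_prop)
  exact this.lintegral_prod_right'.aemeasurable

/-- Applying the one-parameter inequality first in the second variables, with the first ones
fixed, and then in the first variables. -/
lemma lintegral_prod_prod_le {d1 d2 : ℕ} {θ1 θ2 p1 p2 r1 r2 : ℝ} {C1 C2 : ℝ≥0∞}
    (h1 : ∀ F G : Euc d1 → ℝ≥0∞, Measurable F → Measurable G →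
      ∫⁻ x, ∫⁻ y, rieszKernel d1 θ1 x y * F y * G x ≤
        C1 * (∫⁻ y, F y ^ p1) ^ (1 / p1) * (∫⁻ x, G x ^ r1) ^ (1 / r1))
    (h2 : ∀ F G : Euc d2 → ℝ≥0∞, Measurable F → Measurable G →
      ∫⁻ x, ∫⁻ y, rieszKernel d2 θ2 x y * F y * G x ≤
        C2 * (∫⁻ y, F y ^ p2) ^ (1 / p2) * (∫⁻ x, G x ^ r2) ^ (1 / r2))
    {f g : Euc d1 × Euc d2 → ℝ≥0∞} (hf : Measurable f) (hg : Measurable g) :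
    ∫⁻ x : Euc d1 × Euc d2, ∫⁻ y : Euc d1 × Euc d2,
      rieszKernel d1 θ1 x.1 y.1 * rieszKernel d2 θ2 x.2 y.2 * f y * g x ≤
      C1 * C2 * (∫⁻ y1, ((∫⁻ y2, f (y1, y2) ^ p2) ^ (1 / p2)) ^ p1) ^ (1 / p1) *
        (∫⁻ x1, ((∫⁻ x2, g (x1, x2) ^ r2) ^ (1 / r2)) ^ r1) ^ (1 / r1) := by
  have hm1 := measurable_rieszKernel d1 θ1
  have hm2 := measurable_rieszKernel d2 θ2
  have hmeas : Measurable fun z : (Euc d1 × Euc d2) × (Euc d1 × Euc d2) =>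
      rieszKernel d1 θ1 z.1.1 z.2.1 * rieszKernel d2 θ2 z.1.2 z.2.2 * f z.2 * g z.1 := by
    have a1 : Measurable fun z : (Euc d1 × Euc d2) × (Euc d1 × Euc d2) =>
        rieszKernel d1 θ1 z.1.1 z.2.1 :=
      hm1.comp (f := fun z : (Euc d1 × Euc d2) × (Euc d1 × Euc d2) => (z.1.1, z.2.1)) (by fun_prop)
    have a2 : Measurable fun z : (Euc d1 × Euc d2) × (Euc d1 × Euc d2) =>
        rieszKernel d2 θ2 z.1.2 z.2.2 :=
      hm2.comp (f := fun z : (Euc d1 × Euc d2) × (Euc d1 × Euc d2) => (z.1.2, z.2.2)) (by fun_prop)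
    fun_prop
  set F : Euc d1 → ℝ≥0∞ := fun y1 => (∫⁻ y2, f (y1, y2) ^ p2) ^ (1 / p2) with hF
  set G : Euc d1 → ℝ≥0∞ := fun x1 => (∫⁻ x2, g (x1, x2) ^ r2) ^ (1 / r2) with hG
  have hFm : Measurable F := ((hf.pow_const p2).lintegral_prod_right').pow_const _
  have hGm : Measurable G := ((hg.pow_const r2).lintegral_prod_right').pow_const _
  rw [Measure.volume_eq_prod, lintegral_prod_prod_comm volume volume hmeas]
  calc ∫⁻ x1, ∫⁻ y1, ∫⁻ x2, ∫⁻ y2,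
        rieszKernel d1 θ1 x1 y1 * rieszKernel d2 θ2 x2 y2 * f (y1, y2) * g (x1, x2)
    _ ≤ ∫⁻ x1, ∫⁻ y1, C2 * (rieszKernel d1 θ1 x1 y1 * F y1 * G x1) := by
        refine lintegral_mono fun x1 => lintegral_mono fun y1 => ?_
        have hfy : Measurable fun y2 => f (y1, y2) := hf.comp measurable_prodMk_left
        have hgx : Measurable fun x2 => g (x1, x2) := hg.comp measurable_prodMk_left
        have hm : Measurable (Function.uncurry fun x2 y2 =>
            rieszKernel d2 θ2 x2 y2 * f (y1, y2) * g (x1, x2)) :=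
          (hm2.mul (hfy.comp measurable_snd)).mul (hgx.comp measurable_fst)
        calc _ = rieszKernel d1 θ1 x1 y1 * ∫⁻ x2, ∫⁻ y2,
              rieszKernel d2 θ2 x2 y2 * f (y1, y2) * g (x1, x2) := by
              rw [← lintegral_const_mul _ hm.lintegral_prod_right]
              refine lintegral_congr fun x2 => ?_
              rw [← lintegral_const_mul _ hm.of_uncurry_left]
              refine lintegral_congr fun y2 => ?_
              ring
          _ ≤ rieszKernel d1 θ1 x1 y1 * (C2 * F y1 * G x1) :=
              mul_le_mul_right (h2 _ _ hfy hgx) _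
          _ = _ := by ring
    _ = C2 * ∫⁻ x1, ∫⁻ y1, rieszKernel d1 θ1 x1 y1 * F y1 * G x1 := by
        have hm : Measurable (Function.uncurry fun x1 y1 =>
            rieszKernel d1 θ1 x1 y1 * F y1 * G x1) :=
          (hm1.mul (hFm.comp measurable_snd)).mul (hGm.comp measurable_fst)
        rw [← lintegral_const_mul _ hm.lintegral_prod_right]
        exact lintegral_congr fun x1 => lintegral_const_mul _ hm.of_uncurry_left
    _ ≤ C2 * (C1 * (∫⁻ y1, F y1 ^ p1) ^ (1 / p1) * (∫⁻ x1, G x1 ^ r1) ^ (1 / r1)) :=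
        mul_le_mul_right (h1 F G hFm hGm) _
    _ = _ := by ring

theorem statement19 (d1 d2 : ℕ) (hd1 : 1 ≤ d1) (hd2 : 1 ≤ d2)
    (p1 p2 q1 q2 q1' q2' : ℝ) (hp1 : 1 < p1) (hp2 : 1 < p2)
    (hpq1 : p1 < q1) (hpq2 : p2 < q2)
    (hq1' : 1 / q1 + 1 / q1' = 1) (hq2' : 1 / q2 + 1 / q2' = 1)
    (α1 α2 : ℝ) (hα1 : 0 < α1) (hα1' : α1 ≤ 1) (hα2 : 0 < α2) (hα2' : α2 ≤ 1)
    (CK1 CK2 : ℝ) (hCK1 : 0 ≤ CK1) (hCK2 : 0 ≤ CK2) :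
    ∃ C : ℝ, 0 < C ∧
      ∀ (K1 : Euc d1 → Euc d1 → ℂ) (K2 : Euc d2 → Euc d2 → ℂ),
        IsCZKernel d1 α1 CK1 K1 → IsCZKernel d2 α2 CK2 K2 →
      ∀ b f g : Euc d1 × Euc d2 → ℂ, Measurable b → Measurable f → Measurable g →
        (∫⁻ x : Euc d1 × Euc d2, ∫⁻ y : Euc d1 × Euc d2,
            (‖biB b x y‖₊ : ℝ≥0∞) * (‖K1 x.1 y.1‖₊ : ℝ≥0∞) * (‖K2 x.2 y.2‖₊ : ℝ≥0∞) *
              (‖f y‖₊ : ℝ≥0∞) * (‖g x‖₊ : ℝ≥0∞)) ≤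
          ENNReal.ofReal C *
            (⨆ (x1 : Euc d1) (y1 : Euc d1) (x2 : Euc d2) (y2 : Euc d2)
                (_ : x1 ≠ y1) (_ : x2 ≠ y2),
              ENNReal.ofReal (‖b (x1, x2) - b (x1, y2) - b (y1, x2) + b (y1, y2)‖ /
                (dist x1 y1 ^ ((d1 : ℝ) * (1 / p1 - 1 / q1)) *
                  dist x2 y2 ^ ((d2 : ℝ) * (1 / p2 - 1 / q2))))) *
            mixedNorm (ENNReal.ofReal p1) (ENNReal.ofReal p2) f *
            mixedNorm (ENNReal.ofReal q1') (ENNReal.ofReal q2') g := by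
  have hconj : ∀ {p q r : ℝ}, 1 < p → p < q → 1 / q + 1 / r = 1 → 0 ≤ r := by
    intro p q r hp hpq hr
    have : 1 / q < 1 := by rw [div_lt_one (by linarith)]; linarith
    exact (one_div_pos.1 (by linarith)).le
  obtain ⟨C1, hC1, hHLS1⟩ := exists_hls hd1 hp1 hpq1 hq1'
  obtain ⟨C2, hC2, hHLS2⟩ := exists_hls hd2 hp2 hpq2 hq2'
  set E := ENNReal.ofReal CK1 * ENNReal.ofReal CK2 * (C1 * C2) with hE
  have hEt : E ≠ ∞ := by finiteness
  -- the summand `1` makes the constant positive even if `CK1 * CK2 = 0`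
  refine ⟨E.toReal + 1, by positivity, fun K1 K2 hK1 hK2 b f g _ hf hg => ?_⟩
  have hEle : E ≤ ENNReal.ofReal (E.toReal + 1) := by
    conv_lhs => rw [← ENNReal.ofReal_toReal hEt]
    exact ENNReal.ofReal_le_ofReal (by linarith)
  change _ ≤ ENNReal.ofReal (E.toReal + 1) *
    biHolder ((d1 : ℝ) * (1 / p1 - 1 / q1)) ((d2 : ℝ) * (1 / p2 - 1 / q2)) b * _ * _
  set N := biHolder ((d1 : ℝ) * (1 / p1 - 1 / q1)) ((d2 : ℝ) * (1 / p2 - 1 / q2)) b with hN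
  rw [mixedNorm_ofReal (by linarith) (by linarith),
    mixedNorm_ofReal (hconj hp1 hpq1 hq1') (hconj hp2 hpq2 hq2')]
  have hfm : Measurable fun y => (‖f y‖₊ : ℝ≥0∞) := hf.nnnorm.coe_nnreal_ennreal
  have hgm : Measurable fun y => (‖g y‖₊ : ℝ≥0∞) := hg.nnnorm.coe_nnreal_ennreal
  have hmeas : Measurable (Function.uncurry fun x y : Euc d1 × Euc d2 =>
      rieszKernel d1 (1 / p1 - 1 / q1) x.1 y.1 * rieszKernel d2 (1 / p2 - 1 / q2) x.2 y.2 *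
        (‖f y‖₊ : ℝ≥0∞) * (‖g x‖₊ : ℝ≥0∞)) :=
    ((((measurable_rieszKernel d1 _).comp
      (f := fun z : (Euc d1 × Euc d2) × (Euc d1 × Euc d2) => (z.1.1, z.2.1)) (by fun_prop)).mul
      ((measurable_rieszKernel d2 _).comp
      (f := fun z : (Euc d1 × Euc d2) × (Euc d1 × Euc d2) => (z.1.2, z.2.2)) (by fun_prop))).mul
      (hfm.comp measurable_snd)).mul (hgm.comp measurable_fst)
  calc _ ≤ ∫⁻ x : Euc d1 × Euc d2, ∫⁻ y : Euc d1 × Euc d2,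
        ENNReal.ofReal CK1 * ENNReal.ofReal CK2 * N *
          (rieszKernel d1 (1 / p1 - 1 / q1) x.1 y.1 * rieszKernel d2 (1 / p2 - 1 / q2) x.2 y.2 *
            (‖f y‖₊ : ℝ≥0∞) * (‖g x‖₊ : ℝ≥0∞)) := by
        refine lintegral_mono fun x => lintegral_mono fun y => ?_
        have := norm_kernel_product_le hK1 hK2 hCK1 hCK2 (1 / p1 - 1 / q1) (1 / p2 - 1 / q2) b x y
        calc _ ≤ ENNReal.ofReal CK1 * ENNReal.ofReal CK2 * N *
              (rieszKernel d1 (1 / p1 - 1 / q1) x.1 y.1 *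
                rieszKernel d2 (1 / p2 - 1 / q2) x.2 y.2) *
              (‖f y‖₊ : ℝ≥0∞) * (‖g x‖₊ : ℝ≥0∞) :=
              mul_le_mul_left (mul_le_mul_left this _) _
          _ = _ := by ring
    _ = ENNReal.ofReal CK1 * ENNReal.ofReal CK2 * N *
          ∫⁻ x : Euc d1 × Euc d2, ∫⁻ y : Euc d1 × Euc d2,
          (rieszKernel d1 (1 / p1 - 1 / q1) x.1 y.1 * rieszKernel d2 (1 / p2 - 1 / q2) x.2 y.2 *
            (‖f y‖₊ : ℝ≥0∞) * (‖g x‖₊ : ℝ≥0∞)) := by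
        rw [← lintegral_const_mul _ hmeas.lintegral_prod_right]
        exact lintegral_congr fun x => lintegral_const_mul _ hmeas.of_uncurry_left
    _ ≤ ENNReal.ofReal CK1 * ENNReal.ofReal CK2 * N * _ :=
        mul_le_mul_right (lintegral_prod_prod_le hHLS1 hHLS2 hfm hgm) _
    _ = E * N * (∫⁻ y1, ((∫⁻ y2, (‖f (y1, y2)‖₊ : ℝ≥0∞) ^ p2) ^ (1 / p2)) ^ p1) ^ (1 / p1) *
          (∫⁻ x1, ((∫⁻ x2, (‖g (x1, x2)‖₊ : ℝ≥0∞) ^ q2') ^ (1 / q2')) ^ q1') ^ (1 / q1') := by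
        rw [hE]; ring
    _ ≤ _ := by gcongr
end
end
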